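/- arXiv:math/0405292 — 2 statements merged into one kernel-verified Lean document; each statement's English description precedes it below -/
import Mathlib

section
/- (Quasi power theorem of Hwang.) Let (Ω_n)_{n≥1} be a sequence of integer-valued random variables, let τ > 0, and suppose the moment generating functions M_n(s) := E(e^{Ω_n s}) exist for all complex s with |s| ≤ τ and satisfy M_n(s) = e^{u(s)φ(n) + v(s)}·(1 + O(κ_n^{−1})) uniformly for |s| ≤ τ, where: u and v are analytic on the closed disk |s| ≤ τ and independent of n; u'(0) and u''(0) are real with u''(0) > 0; φ(n) → ∞ and φ(n) > 0; κ_n → ∞. Then the distribution of Ω_n is asymptotically Gaussian: P{(Ω_n − u'(0)φ(n))/√(u''(0)φ(n)) < x} = Φ_N(x) + O(1/κ_n + 1/√(φ(n))) uniformly in x ∈ ℝ; moreover E(Ω_n) = u'(0)φ(n) + v'(0) + O(κ_n^{−1}) and V(Ω_n) = u''(0)φ(n) + v''(0) + O(κ_n^{−1}). -/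
open MeasureTheory

/-- The standard normal distribution function `Φ_N(x) = (2π)^{−1/2}·∫_{−∞}^x e^{−t²/2} dt`. -/
noncomputable def stdNormalCDF (x : ℝ) : ℝ :=
  (Real.sqrt (2 * Real.pi))⁻¹ * ∫ t in Set.Iio x, Real.exp (-(t ^ 2) / 2)

/-!
Write `M_n` for the moment generating function of `Ω_n`. For large `n` the quotient
`M_n e^{-(u φ_n + v)}` is close to `1`, so its logarithm `ℓ_n` is holomorphic and `O(1 / κ_n)`, and
`M_n = e^{u φ_n + v + ℓ_n}`. Mean and variance are the first two derivatives of `log M_n` at `0`,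
and Cauchy's estimates bound the contribution of `ℓ_n` to them by `O(1 / κ_n)`.

On the imaginary axis, Taylor's formula for `u` and Schwarz's lemma for `v + ℓ_n` show that the
characteristic function of the standardised variable is `e^{-r² / 2 + R_n(r)}` with
`R_n(r) = O((|r| + |r|³) / √φ_n)` and `|R_n(r)| ≤ r² / 4 + O(1)` for `|r| ≤ c √φ_n`. Esseen's
smoothing inequality, obtained by convolution with the Fejér kernel, turns this into the uniform
bound on the distribution functions.
-/

open Complex Filter Metric ProbabilityTheory Set Topology
open scoped NNReal

section SignedIndicator

/-- The signed indicator function of the interval from `a` to `b`, normalised so that its integral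
against `g` is the interval integral `∫ z in a..b, g z`. -/
noncomputable def signedIndicator (a b z : ℝ) : ℝ :=
  (Ioc a b).indicator 1 z - (Ioc b a).indicator 1 z

lemma signedIndicator_eq_indicator_Iio_sub (a b z : ℝ) :
    signedIndicator a b z = (Iio z).indicator 1 a - (Iio z).indicator 1 b := by
  simp only [signedIndicator, indicator_apply, mem_Ioc, mem_Iio, Pi.one_apply]
  grind

lemma abs_signedIndicator (a b z : ℝ) :
    |signedIndicator a b z| = (uIoc a b).indicator 1 z := by
  rcases le_total a b with h | h
  · rw [signedIndicator, uIoc_of_le h, Ioc_eq_empty h.not_gt, indicator_empty, sub_zero]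
    exact abs_of_nonneg (indicator_nonneg (fun _ _ ↦ zero_le_one) z)
  · rw [signedIndicator, uIoc_of_ge h, Ioc_eq_empty h.not_gt, indicator_empty, zero_sub, abs_neg]
    exact abs_of_nonneg (indicator_nonneg (fun _ _ ↦ zero_le_one) z)

lemma measurable_signedIndicator :
    Measurable fun p : (ℝ × ℝ) × ℝ ↦ signedIndicator p.1.1 p.1.2 p.2 := by
  simp_rw [signedIndicator_eq_indicator_Iio_sub, indicator_apply, mem_Iio]
  exact (Measurable.ite (measurableSet_lt (by fun_prop) (by fun_prop)) (by fun_prop)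
    (by fun_prop)).sub (Measurable.ite (measurableSet_lt (by fun_prop) (by fun_prop))
    (by fun_prop) (by fun_prop))

lemma integral_signedIndicator_mul {g : ℝ → ℂ} {a b : ℝ}
    (hg : IntervalIntegrable g volume a b) :
    ∫ z, signedIndicator a b z * g z = ∫ z in a..b, g z := by
  have hmul (z : ℝ) : signedIndicator a b z * g z
      = (Ioc a b).indicator g z - (Ioc b a).indicator g z := by
    simp only [signedIndicator, indicator_apply, Pi.one_apply]
    split_ifs <;> simp
  simp_rw [hmul]
  rw [integral_sub (hg.1.integrable_indicator measurableSet_Ioc)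
      (hg.2.integrable_indicator measurableSet_Ioc),
    integral_indicator measurableSet_Ioc, integral_indicator measurableSet_Ioc, intervalIntegral]

lemma integral_abs_signedIndicator (a b : ℝ) : ∫ z, |signedIndicator a b z| = |b - a| := by
  simp_rw [abs_signedIndicator]
  rw [integral_indicator_one measurableSet_uIoc, measureReal_def, uIoc, Real.volume_Ioc,
    max_sub_min_eq_abs, ENNReal.toReal_ofReal (abs_nonneg _)]

lemma integrable_signedIndicator (a b : ℝ) : Integrable (signedIndicator a b) :=
  (continuous_one.integrableOn_Ioc.integrable_indicator measurableSet_Ioc).sub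
    (continuous_one.integrableOn_Ioc.integrable_indicator measurableSet_Ioc)

end SignedIndicator

section CDFDiff

/-- The difference `F_ν - F_γ` of the left-continuous distribution functions `z ↦ ν(-∞, z)` and
`z ↦ γ(-∞, z)` whose supremum norm is estimated by Esseen's inequality. -/
noncomputable def cdfDiff (ν γ : Measure ℝ) (z : ℝ) : ℝ :=
  ν.real (Iio z) - γ.real (Iio z)

variable {ν γ : Measure ℝ} [IsProbabilityMeasure ν] [IsProbabilityMeasure γ]

lemma abs_cdfDiff_le_one (z : ℝ) : |cdfDiff ν γ z| ≤ 1 :=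
  abs_sub_le_of_nonneg_of_le measureReal_nonneg measureReal_le_one measureReal_nonneg
    measureReal_le_one

lemma cdfDiff_eq_integral_prod (z : ℝ) :
    cdfDiff ν γ z = ∫ p, signedIndicator p.1 p.2 z ∂ν.prod γ := by
  simp_rw [signedIndicator_eq_indicator_Iio_sub]
  have hind (ρ : Measure ℝ) [IsProbabilityMeasure ρ] :
      Integrable ((Iio z).indicator (1 : ℝ → ℝ)) ρ :=
    (integrable_const 1).indicator measurableSet_Iio
  rw [integral_sub ((hind ν).comp_fst γ) ((hind γ).comp_snd ν), integral_fun_fst,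
    integral_fun_snd]
  simp [integral_indicator_one measurableSet_Iio, cdfDiff]

variable (hν : Integrable id ν) (hγ : Integrable id γ)
include hν hγ

lemma integrable_prod_signedIndicator :
    Integrable (fun p : (ℝ × ℝ) × ℝ ↦ signedIndicator p.1.1 p.1.2 p.2)
      ((ν.prod γ).prod volume) := by
  rw [integrable_prod_iff measurable_signedIndicator.aestronglyMeasurable]
  refine ⟨.of_forall fun p ↦ integrable_signedIndicator p.1 p.2, ?_⟩
  simp_rw [Real.norm_eq_abs, integral_abs_signedIndicator]
  exact ((hγ.comp_snd ν).sub (hν.comp_fst γ)).abs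

lemma integrable_cdfDiff : Integrable (cdfDiff ν γ) := by
  simpa only [← cdfDiff_eq_integral_prod]
    using! (integrable_prod_signedIndicator hν hγ).integral_prod_right

lemma integral_cdfDiff_mul {G g : ℝ → ℂ} (hG : ∀ z, HasDerivAt G (g z) z) (hg : Continuous g)
    {C : ℝ} (hgC : ∀ z, ‖g z‖ ≤ C) (hGν : Integrable G ν) (hGγ : Integrable G γ) :
    ∫ z, cdfDiff ν γ z * g z = ∫ y, G y ∂γ - ∫ y, G y ∂ν := by
  have hint : Integrable (fun p : (ℝ × ℝ) × ℝ ↦ (signedIndicator p.1.1 p.1.2 p.2 : ℂ) * g p.2)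
      ((ν.prod γ).prod volume) :=
    (integrable_prod_signedIndicator hν hγ).ofReal.mul_bdd (c := C)
      (by fun_prop) (.of_forall fun p ↦ hgC p.2)
  calc ∫ z, cdfDiff ν γ z * g z
      = ∫ z, ∫ p, (signedIndicator p.1 p.2 z : ℂ) * g z ∂ν.prod γ := by
        simp_rw [integral_mul_const, integral_complex_ofReal, ← cdfDiff_eq_integral_prod]
    _ = ∫ p : ℝ × ℝ, (∫ z, (signedIndicator p.1 p.2 z : ℂ) * g z) ∂ν.prod γ :=
        (integral_integral_swap hint).symm
    _ = ∫ p, (G p.2 - G p.1) ∂ν.prod γ := by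
        congr with p
        rw [integral_signedIndicator_mul (hg.intervalIntegrable _ _),
          intervalIntegral.integral_eq_sub_of_hasDerivAt (fun z _ ↦ hG z)
            (hg.intervalIntegrable _ _)]
    _ = ∫ y, G y ∂γ - ∫ y, G y ∂ν := by
        rw [integral_sub (hGγ.comp_snd ν) (hGν.comp_fst γ), integral_fun_fst, integral_fun_snd]
        simp

lemma integral_cdfDiff_mul_cexp {r : ℝ} (hr : r ≠ 0) :
    ∫ z, cdfDiff ν γ z * cexp (r * z * I) = (charFun γ r - charFun ν r) / (r * I) := by
  have hrI : (r : ℂ) * I ≠ 0 := by simpa using hr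
  have hnorm (z : ℝ) : ‖cexp (r * z * I)‖ = 1 := by exact_mod_cast norm_exp_ofReal_mul_I (r * z)
  have hG (z : ℝ) : HasDerivAt (fun z : ℝ ↦ cexp (r * z * I) / (r * I)) (cexp (r * z * I)) z := by
    have hlin : HasDerivAt (fun z : ℝ ↦ (r : ℂ) * z * I) (r * I) z := by
      simpa using ((hasDerivAt_id z).ofReal_comp.const_mul (r : ℂ)).mul_const I
    simpa [hrI] using hlin.cexp.div_const (r * I)
  have hint (ρ : Measure ℝ) [IsProbabilityMeasure ρ] :
      Integrable (fun y : ℝ ↦ cexp (r * y * I) / (r * I)) ρ :=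
    (Integrable.of_bound (by fun_prop) 1 (.of_forall fun y ↦ (hnorm y).le)).div_const _
  rw [integral_cdfDiff_mul hν hγ hG (by fun_prop) (fun z ↦ (hnorm z).le) (hint ν) (hint γ),
    integral_div, integral_div, ← charFun_apply_real, ← charFun_apply_real, sub_div]

lemma norm_charFun_sub_div_le {r : ℝ} (hr : 0 < r) :
    ‖charFun ν r - charFun γ r‖ / r ≤ ∫ z, |cdfDiff ν γ z| := by
  have htransform := congr_arg norm (integral_cdfDiff_mul_cexp hν hγ hr.ne')
  rw [norm_div, norm_mul, norm_real, norm_I, mul_one, Real.norm_of_nonneg hr.le,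
    norm_sub_rev] at htransform
  rw [← htransform]
  refine (norm_integral_le_integral_norm _).trans_eq (integral_congr_ae (.of_forall fun z ↦ ?_))
  have hnorm : ‖cexp (r * z * I)‖ = 1 := by exact_mod_cast norm_exp_ofReal_mul_I (r * z)
  simp [hnorm]

lemma intervalIntegrable_norm_charFun_sub_div {T : ℝ} (hT : 0 ≤ T) :
    IntervalIntegrable (fun r ↦ ‖charFun ν r - charFun γ r‖ / r) volume 0 T := by
  refine (intervalIntegrable_const (c := ∫ z, |cdfDiff ν γ z|)).mono_fun' ?_ ?_
  · exact ((measurable_charFun.sub measurable_charFun).norm.div measurable_id).aestronglyMeasurable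
  · filter_upwards [ae_restrict_mem measurableSet_uIoc] with r hr
    rw [uIoc_of_le hT] at hr
    rw [Real.norm_of_nonneg (div_nonneg (norm_nonneg _) hr.1.le)]
    exact norm_charFun_sub_div_le hν hγ hr.1

lemma abs_integral_cdfDiff_mul_cos_le {r : ℝ} (hr : 0 < r) (x : ℝ) :
    |∫ z, cdfDiff ν γ z * Real.cos (r * (x - z))| ≤ ‖charFun ν r - charFun γ r‖ / r := by
  have hre (z : ℝ) : cdfDiff ν γ z * Real.cos (r * (x - z))
      = (cexp (-(r * x) * I) * (cdfDiff ν γ z * cexp (r * z * I))).re := by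
    rw [mul_left_comm, ← Complex.exp_add, re_ofReal_mul]
    rw [show -(r * x : ℂ) * I + r * z * I = ((-(r * (x - z)) : ℝ) : ℂ) * I by push_cast; ring,
      exp_ofReal_mul_I_re, Real.cos_neg]
  have hint : Integrable fun z ↦ cexp (-(r * x) * I) * (cdfDiff ν γ z * cexp (r * z * I)) := by
    refine ((integrable_cdfDiff hν hγ).ofReal.mul_bdd (c := 1) (by fun_prop) ?_).const_mul _
    exact .of_forall fun z ↦ by exact_mod_cast (norm_exp_ofReal_mul_I (r * z)).le
  calc |∫ z, cdfDiff ν γ z * Real.cos (r * (x - z))|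
      = |(cexp (-(r * x) * I) * ∫ z, cdfDiff ν γ z * cexp (r * z * I)).re| := by
        simp_rw [hre]
        rw [← integral_const_mul]
        exact congr_arg abs (integral_re hint)
    _ ≤ ‖cexp ((-(r * x) : ℝ) * I) * ∫ z, cdfDiff ν γ z * cexp (r * z * I)‖ := by
        exact_mod_cast abs_re_le_norm _
    _ = ‖charFun ν r - charFun γ r‖ / r := by
        rw [norm_mul, norm_exp_ofReal_mul_I, one_mul, integral_cdfDiff_mul_cexp hν hγ hr.ne',
          norm_div, norm_mul, norm_real, norm_I, mul_one, Real.norm_of_nonneg hr.le, norm_sub_rev]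

end CDFDiff

section FejerKernel

/-- The Fejér kernel of the real line, normalised to have value `1` at `0`; its Fourier transform
is a multiple of the triangle function supported on `[-1, 1]`. -/
noncomputable def fejerKernel (y : ℝ) : ℝ := Real.sinc (y / 2) ^ 2

lemma fejerKernel_nonneg (y : ℝ) : 0 ≤ fejerKernel y := sq_nonneg _

lemma continuous_fejerKernel : Continuous fejerKernel :=
  (Real.continuous_sinc.comp (continuous_id.div_const 2)).pow 2

lemma fejerKernel_eq_integral (y : ℝ) :
    fejerKernel y = ∫ t in (0 : ℝ)..1, 2 * (1 - t) * Real.cos (t * y) := by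
  rcases eq_or_ne y 0 with rfl | hy
  · simp only [fejerKernel, zero_div, Real.sinc_zero, mul_zero, Real.cos_zero, mul_one]
    rw [intervalIntegral.integral_const_mul, intervalIntegral.integral_sub (by simp) (by simp)]
    norm_num
  have hprimitive (t : ℝ) : HasDerivAt
      (fun t ↦ 2 * ((1 - t) * (Real.sin (t * y) / y) - Real.cos (t * y) / y ^ 2))
      (2 * (1 - t) * Real.cos (t * y)) t := by
    have hlin : HasDerivAt (fun t ↦ t * y) y t := by simpa using (hasDerivAt_id t).mul_const y
    have hsub : HasDerivAt (fun t : ℝ ↦ 1 - t) (-1) t := (hasDerivAt_id t).const_sub 1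
    convert! ((hsub.mul (hlin.sin.div_const y)).sub (hlin.cos.div_const (y ^ 2))).const_mul 2
      using 1
    field_simp
    ring
  rw [intervalIntegral.integral_eq_sub_of_hasDerivAt (fun t _ ↦ hprimitive t)
    (Continuous.intervalIntegrable (by fun_prop) _ _), fejerKernel, Real.sinc_of_ne_zero (by simpa),
    div_pow, Real.sin_sq_eq_half_sub, mul_div_cancel₀ y two_ne_zero]
  simp only [sub_self, zero_mul, one_mul, zero_sub, sub_zero, Real.sin_zero, zero_div, mul_zero,
    Real.cos_zero]
  field_simp
  ring

lemma integrable_fejerKernel : Integrable fejerKernel := by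
  refine (integrable_inv_one_add_sq.const_mul 5).mono'
    continuous_fejerKernel.aestronglyMeasurable (.of_forall fun y ↦ ?_)
  have hone : Real.sinc (y / 2) ^ 2 ≤ 1 := by
    rw [sq_le_one_iff_abs_le_one]
    exact Real.abs_sinc_le_one _
  have hsin : Real.sinc (y / 2) * (y / 2) = Real.sin (y / 2) := by
    rcases eq_or_ne y 0 with rfl | hy
    · simp
    · rw [Real.sinc_of_ne_zero (by simpa), div_mul_cancel₀ _ (by simpa)]
  rw [Real.norm_of_nonneg (fejerKernel_nonneg y), ← div_eq_mul_inv, le_div_iff₀ (by positivity)]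
  calc fejerKernel y * (1 + y ^ 2)
      = Real.sinc (y / 2) ^ 2 + 4 * (Real.sinc (y / 2) * (y / 2)) ^ 2 := by rw [fejerKernel]; ring
    _ ≤ 5 := by rw [hsin]; linarith [Real.sin_sq_le_one (y / 2)]

lemma integral_fejerKernel_pos : 0 < ∫ y, fejerKernel y :=
  integral_pos_of_integrable_nonneg_nonzero (x := 0) continuous_fejerKernel integrable_fejerKernel
    fejerKernel_nonneg (by simp [fejerKernel])

lemma integral_mul_fejerKernel {g : ℝ → ℝ} (hg : Integrable g) :
    ∫ y, g y * fejerKernel y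
      = ∫ t in (0 : ℝ)..1, 2 * (1 - t) * ∫ y, g y * Real.cos (t * y) := by
  have hint : Integrable (fun p : ℝ × ℝ ↦ 2 * (1 - p.1) * (g p.2 * Real.cos (p.1 * p.2)))
      ((volume.restrict (uIoc 0 1)).prod volume) := by
    have hlin : Integrable (fun t : ℝ ↦ 2 * (1 - t)) (volume.restrict (uIoc 0 1)) :=
      (Continuous.integrableOn_uIcc (by fun_prop)).mono_set uIoc_subset_uIcc
    simp_rw [← mul_assoc]
    exact (hlin.mul_prod hg).mul_bdd (c := 1) (by fun_prop)
      (.of_forall fun p ↦ Real.abs_cos_le_one _)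
  calc ∫ y, g y * fejerKernel y
      = ∫ y, ∫ t in (0 : ℝ)..1, 2 * (1 - t) * (g y * Real.cos (t * y)) := by
        simp_rw [fejerKernel_eq_integral, ← intervalIntegral.integral_const_mul, mul_left_comm]
    _ = ∫ t in (0 : ℝ)..1, ∫ y, 2 * (1 - t) * (g y * Real.cos (t * y)) :=
        (intervalIntegral_integral_swap hint).symm
    _ = ∫ t in (0 : ℝ)..1, 2 * (1 - t) * ∫ y, g y * Real.cos (t * y) := by
        simp_rw [integral_const_mul]

end FejerKernel

section Esseen

lemma exists_setIntegral_compl_Icc_lt {f : ℝ → ℝ} (hf : Integrable f) {ε : ℝ} (hε : 0 < ε) :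
    ∃ L : ℝ, 0 < L ∧ ∫ y in (Icc (-L) L)ᶜ, f y < ε := by
  have hlim := (aecover_Icc (μ := volume) tendsto_neg_atTop_atBot
    tendsto_id).integral_tendsto_of_countably_generated hf
  obtain ⟨L, hLε, hL⟩ := ((hlim.eventually_const_lt (sub_lt_self _ hε)).and
    (eventually_gt_atTop 0)).exists
  refine ⟨L, hL, ?_⟩
  rw [setIntegral_compl measurableSet_Icc hf]
  simp only [id_eq] at hLε
  linarith

lemma mul_integral_le_of_le_on {α : Type*} [MeasurableSpace α] {μ : Measure α} {K g : α → ℝ}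
    {s : Set α} {η p : ℝ} (hK : Integrable K μ) (hK0 : 0 ≤ K) (hg : AEStronglyMeasurable g μ)
    (hs : MeasurableSet s) (hgη : ∀ y, |g y| ≤ η) (hpη : p ≤ η) (hp : ∀ y ∈ s, p ≤ g y) :
    p * ∫ y, K y ∂μ ≤ ∫ y, g y * K y ∂μ + 2 * η * ∫ y in sᶜ, K y ∂μ := by
  have hgK : Integrable (fun y ↦ g y * K y) μ := hK.bdd_mul hg (.of_forall hgη)
  have hKs : Integrable (fun y ↦ 2 * η * sᶜ.indicator K y) μ :=
    (hK.indicator hs.compl).const_mul _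
  rw [← integral_indicator hs.compl, ← integral_const_mul, ← integral_const_mul,
    ← integral_add hgK hKs]
  refine integral_mono (hK.const_mul p) (hgK.add hKs) fun y ↦ ?_
  by_cases hy : y ∈ s
  · simpa [hy] using mul_le_mul_of_nonneg_right (hp y hy) (hK0 y)
  · have hle : p ≤ g y + 2 * η := by linarith [neg_le_of_abs_le (hgη y)]
    simpa [hy, add_mul] using mul_le_mul_of_nonneg_right hle (hK0 y)

lemma le_div_integral_add_quarter {α : Type*} [MeasurableSpace α] {μ : Measure α} {K g : α → ℝ}
    {s : Set α} {η p A : ℝ} (hK : Integrable K μ) (hK0 : 0 ≤ K) (hI : 0 < ∫ y, K y ∂μ)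
    (hg : AEStronglyMeasurable g μ) (hs : MeasurableSet s)
    (htail : ∫ y in sᶜ, K y ∂μ ≤ (∫ y, K y ∂μ) / 8) (hη : 0 ≤ η) (hgη : ∀ y, |g y| ≤ η)
    (hpη : p ≤ η) (hp : ∀ y ∈ s, p ≤ g y) (hA : ∫ y, g y * K y ∂μ ≤ A) :
    p ≤ A / (∫ y, K y ∂μ) + η / 4 := by
  refine le_of_mul_le_mul_right ?_ hI
  calc p * ∫ y, K y ∂μ
      ≤ ∫ y, g y * K y ∂μ + 2 * η * ∫ y in sᶜ, K y ∂μ :=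
        mul_integral_le_of_le_on hK hK0 hg hs hgη hpη hp
    _ ≤ A + 2 * η * ((∫ y, K y ∂μ) / 8) := by gcongr
    _ = (A / (∫ y, K y ∂μ) + η / 4) * ∫ y, K y ∂μ := by
        field_simp
        ring

variable {ν γ : Measure ℝ} [IsProbabilityMeasure ν] [IsProbabilityMeasure γ]
    (hν : Integrable id ν) (hγ : Integrable id γ)

include hν hγ in
lemma abs_integral_cdfDiff_mul_fejerKernel_le {T : ℝ} (hT : 0 < T) (x : ℝ) :
    |∫ y, cdfDiff ν γ (x - y / T) * fejerKernel y|
      ≤ 2 * ∫ r in 0..T, ‖charFun ν r - charFun γ r‖ / r := by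
  set f : ℝ → ℝ := fun r ↦ ‖charFun ν r - charFun γ r‖ / r
  have hcos {t : ℝ} (ht : 0 < t) :
      |∫ y, cdfDiff ν γ (x - y / T) * Real.cos (t * y)| ≤ T * f (t * T) := by
    have hsubst (y : ℝ) : cdfDiff ν γ (x - y / T) * Real.cos (t * y)
        = cdfDiff ν γ (x - y / T) * Real.cos (t * T * (x - (x - y / T))) := by
      congr 2
      field_simp
      ring
    simp_rw [hsubst]
    rw [Measure.integral_comp_div
        (fun z ↦ cdfDiff ν γ (x - z) * Real.cos (t * T * (x - (x - z)))) T,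
      integral_sub_left_eq_self (fun z ↦ cdfDiff ν γ z * Real.cos (t * T * (x - z))),
      smul_eq_mul, abs_mul, abs_abs, abs_of_pos hT]
    gcongr
    exact abs_integral_cdfDiff_mul_cos_le hν hγ (mul_pos ht hT) x
  have hfint : IntervalIntegrable (fun t ↦ 2 * (T * f (t * T))) volume 0 1 := by
    have hscale := (intervalIntegrable_norm_charFun_sub_div hν hγ hT.le).comp_mul_right (c := T)
    rw [zero_div, div_self hT.ne'] at hscale
    exact (hscale.const_mul T).const_mul 2
  rw [integral_mul_fejerKernel (((integrable_cdfDiff hν hγ).comp_sub_left x).comp_div hT.ne')]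
  calc |∫ t in (0 : ℝ)..1, 2 * (1 - t) * ∫ y, cdfDiff ν γ (x - y / T) * Real.cos (t * y)|
      ≤ ∫ t in (0 : ℝ)..1, 2 * (T * f (t * T)) := by
        rw [← Real.norm_eq_abs]
        refine intervalIntegral.norm_integral_le_of_norm_le zero_le_one
          (.of_forall fun t ht ↦ ?_) hfint
        rw [norm_mul, norm_mul, Real.norm_two, Real.norm_of_nonneg (sub_nonneg.2 ht.2), mul_assoc]
        exact mul_le_mul_of_nonneg_left ((mul_le_of_le_one_left (abs_nonneg _)
          (sub_le_self _ ht.1.le)).trans (hcos ht.1)) zero_le_two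
    _ = 2 * ∫ r in 0..T, f r := by
        rw [intervalIntegral.integral_const_mul, intervalIntegral.integral_const_mul,
          intervalIntegral.mul_integral_comp_mul_right, zero_mul, one_mul]

omit [IsProbabilityMeasure γ] in
lemma cdfDiff_le_cdfDiff_add {c : ℝ≥0} (hγc : LipschitzWith c fun x ↦ γ.real (Iio x)) {x z : ℝ}
    (hxz : x ≤ z) : cdfDiff ν γ x ≤ cdfDiff ν γ z + c * (z - x) := by
  have hνmono : ν.real (Iio x) ≤ ν.real (Iio z) := measureReal_mono (Iio_subset_Iio hxz)
  have hγlip := hγc.dist_le_mul z x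
  rw [Real.dist_eq, Real.dist_eq, abs_of_nonneg (sub_nonneg.2 hxz)] at hγlip
  rw [cdfDiff, cdfDiff]
  linarith [le_of_abs_le hγlip]

include hν hγ in
lemma abs_cdfDiff_le_of_forall_abs_cdfDiff_le {c : ℝ≥0}
    (hγc : LipschitzWith c fun x ↦ γ.real (Iio x)) {T L η : ℝ} (hT : 0 < T) (hL : 0 ≤ L)
    (htail : ∫ y in (Icc (-L) L)ᶜ, fejerKernel y ≤ (∫ y, fejerKernel y) / 8)
    (hη : ∀ z, |cdfDiff ν γ z| ≤ η) (x : ℝ) :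
    |cdfDiff ν γ x| ≤ 2 * (∫ r in 0..T, ‖charFun ν r - charFun γ r‖ / r) / (∫ y, fejerKernel y)
      + η / 4 + 2 * L * (c / T) := by
  have hη0 : 0 ≤ η := (abs_nonneg _).trans (hη 0)
  have hLT : 0 ≤ 2 * L * (c / T) := by positivity
  have hmeas (x' : ℝ) : AEStronglyMeasurable fun y ↦ cdfDiff ν γ (x' - y / T) :=
    (((integrable_cdfDiff hν hγ).comp_sub_left x').comp_div hT.ne').aestronglyMeasurable
  -- Since `F_ν` is monotone, the value of `F_ν - F_γ` at `x` persists, up to the Lipschitz bound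
  -- for `F_γ`, to the right of `x` if it is positive and to the left of `x` if it is negative.
  have hright (y : ℝ) (hy : y ∈ Icc (-L) L) :
      cdfDiff ν γ x - 2 * L * (c / T) ≤ cdfDiff ν γ (x + L / T - y / T) := by
    have hz : x ≤ x + L / T - y / T := by linarith [div_le_div_of_nonneg_right hy.2 hT.le]
    have hlen : c * (x + L / T - y / T - x) ≤ 2 * L * (c / T) := by
      rw [show c * (x + L / T - y / T - x) = (L - y) * (c / T) by ring]
      gcongr
      linarith [hy.1]
    linarith [cdfDiff_le_cdfDiff_add (ν := ν) hγc hz]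
  have hleft (y : ℝ) (hy : y ∈ Icc (-L) L) :
      -cdfDiff ν γ x - 2 * L * (c / T) ≤ -cdfDiff ν γ (x - L / T - y / T) := by
    have hz : x - L / T - y / T ≤ x := by
      linarith [div_le_div_of_nonneg_right hy.1 hT.le, neg_div T L]
    have hlen : c * (x - (x - L / T - y / T)) ≤ 2 * L * (c / T) := by
      rw [show c * (x - (x - L / T - y / T)) = (L + y) * (c / T) by ring]
      gcongr
      linarith [hy.2]
    linarith [cdfDiff_le_cdfDiff_add (ν := ν) hγc hz]
  refine abs_le'.2 ⟨sub_le_iff_le_add.1 ?_, sub_le_iff_le_add.1 ?_⟩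
  · exact le_div_integral_add_quarter integrable_fejerKernel fejerKernel_nonneg
      integral_fejerKernel_pos (hmeas _) measurableSet_Icc htail hη0 (fun y ↦ hη _)
      (by linarith [le_of_abs_le (hη x)]) hright
      ((le_abs_self _).trans (abs_integral_cdfDiff_mul_fejerKernel_le hν hγ hT _))
  · refine le_div_integral_add_quarter integrable_fejerKernel fejerKernel_nonneg
      integral_fejerKernel_pos (hmeas _).neg measurableSet_Icc htail hη0
      (fun y ↦ (abs_neg _).trans_le (hη _)) (by linarith [neg_le_of_abs_le (hη x)]) hleft ?_
    simp_rw [Pi.neg_apply, neg_mul, integral_neg]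
    exact (neg_le_abs _).trans (abs_integral_cdfDiff_mul_fejerKernel_le hν hγ hT _)

theorem exists_abs_cdfDiff_le_integral_norm_charFun_sub :
    ∃ C > 0, ∀ (ν γ : Measure ℝ) [IsProbabilityMeasure ν] [IsProbabilityMeasure γ] (c : ℝ≥0)
      (T : ℝ), Integrable id ν → Integrable id γ → LipschitzWith c (fun x ↦ γ.real (Iio x)) →
      0 < T → ∀ x,
      |cdfDiff ν γ x| ≤ C * ((∫ r in 0..T, ‖charFun ν r - charFun γ r‖ / r) + c / T) := by
  have hI := integral_fejerKernel_pos
  obtain ⟨L, hL, htail⟩ :=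
    exists_setIntegral_compl_Icc_lt integrable_fejerKernel (ε := (∫ y, fejerKernel y) / 8)
      (by positivity)
  refine ⟨2 * (2 / (∫ y, fejerKernel y) + 2 * L), by positivity,
    fun ν γ _ _ c T hν hγ hγc hT x ↦ ?_⟩
  set A := ∫ r in 0..T, ‖charFun ν r - charFun γ r‖ / r
  have hA : 0 ≤ A := intervalIntegral.integral_nonneg hT.le fun r hr ↦
    div_nonneg (norm_nonneg _) hr.1
  have hbdd : BddAbove (range fun z ↦ |cdfDiff ν γ z|) :=
    ⟨1, forall_mem_range.2 abs_cdfDiff_le_one⟩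
  have hsup : (⨆ z, |cdfDiff ν γ z|) ≤
      2 * A / (∫ y, fejerKernel y) + (⨆ z, |cdfDiff ν γ z|) / 4 + 2 * L * (c / T) :=
    ciSup_le (abs_cdfDiff_le_of_forall_abs_cdfDiff_le hν hγ hγc hT hL.le htail.le (le_ciSup hbdd))
  calc |cdfDiff ν γ x| ≤ ⨆ z, |cdfDiff ν γ z| := le_ciSup hbdd x
    _ ≤ 2 * (2 / (∫ y, fejerKernel y) * A + 2 * L * (c / T)) := by
        have hnonneg := (abs_nonneg _).trans (le_ciSup hbdd x)
        rw [div_mul_eq_mul_div]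
        linarith
    _ ≤ 2 * (2 / (∫ y, fejerKernel y) + 2 * L) * (A + c / T) := by
        have hcross : 0 ≤ 2 / (∫ y, fejerKernel y) * (c / T) + 2 * L * A := by positivity
        linarith

end Esseen

section Gaussian

lemma gaussianPDFReal_le (m : ℝ) (v : ℝ≥0) (x : ℝ) :
    gaussianPDFReal m v x ≤ (√(2 * Real.pi * v))⁻¹ :=
  mul_le_of_le_one_right (by positivity)
    (Real.exp_le_one_iff.2 (div_nonpos_of_nonpos_of_nonneg (by nlinarith) (by positivity)))

lemma lipschitzWith_gaussianReal_real_Iio (m : ℝ) {v : ℝ≥0} (hv : v ≠ 0) :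
    LipschitzWith (√(2 * Real.pi * v))⁻¹.toNNReal fun x ↦ (gaussianReal m v).real (Iio x) := by
  have hK : 0 ≤ (√(2 * Real.pi * v))⁻¹ := by positivity
  refine LipschitzWith.of_le_add_mul _ fun x y ↦ ?_
  rw [Real.coe_toNNReal _ hK]
  have hIco : (gaussianReal m v).real (Ico y x) ≤ (√(2 * Real.pi * v))⁻¹ * dist x y := by
    rw [measureReal_def, gaussianReal_apply_eq_integral m hv,
      ENNReal.toReal_ofReal (integral_nonneg (gaussianPDFReal_nonneg m v))]
    calc ∫ t in Ico y x, gaussianPDFReal m v t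
        ≤ ∫ _ in Ico y x, (√(2 * Real.pi * v))⁻¹ :=
          integral_mono (integrable_gaussianPDFReal m v).integrableOn (integrable_const _)
            (gaussianPDFReal_le m v)
      _ = max (x - y) 0 * (√(2 * Real.pi * v))⁻¹ := by simp
      _ ≤ (√(2 * Real.pi * v))⁻¹ * dist x y := by
          rw [mul_comm, Real.dist_eq]
          gcongr
          exact max_le (le_abs_self _) (abs_nonneg _)
  calc (gaussianReal m v).real (Iio x)
      ≤ (gaussianReal m v).real (Iio y ∪ Ico y x) :=
        measureReal_mono Iio_subset_Iio_union_Ico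
    _ ≤ (gaussianReal m v).real (Iio y) + (gaussianReal m v).real (Ico y x) :=
        measureReal_union_le _ _
    _ ≤ (gaussianReal m v).real (Iio y) + (√(2 * Real.pi * v))⁻¹ * dist x y := by gcongr

lemma stdNormalCDF_eq_gaussianReal_real_Iio (x : ℝ) :
    stdNormalCDF x = (gaussianReal 0 1).real (Iio x) := by
  rw [measureReal_def, gaussianReal_apply_eq_integral 0 one_ne_zero,
    ENNReal.toReal_ofReal (integral_nonneg (gaussianPDFReal_nonneg 0 1)), stdNormalCDF,
    ← integral_const_mul]
  simp [gaussianPDFReal]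

lemma integrable_one_add_sq_mul_exp_neg_mul_sq {b : ℝ} (hb : 0 < b) :
    Integrable fun r : ℝ ↦ (1 + r ^ 2) * Real.exp (-b * r ^ 2) := by
  have hsq := integrable_rpow_mul_exp_neg_mul_sq hb (s := 2) (by norm_num)
  simp only [Real.rpow_two] at hsq
  simp only [one_add_mul]
  exact (integrable_exp_neg_mul_sq hb).add hsq

end Gaussian

section ComplexAnalysis

lemma exists_eq_cexp_add {U : Set ℂ} {M w : ℂ → ℂ} (hM : DifferentiableOn ℂ M U)
    (hw : DifferentiableOn ℂ w U) {ε : ℝ} (hε : ε ≤ 1 / 2)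
    (hMw : ∀ s ∈ U, ‖M s * cexp (-w s) - 1‖ ≤ ε) :
    ∃ ℓ : ℂ → ℂ, DifferentiableOn ℂ ℓ U ∧ (∀ s ∈ U, ‖ℓ s‖ ≤ 3 / 2 * ε) ∧
      ∀ s ∈ U, M s = cexp (w s + ℓ s) := by
  have hslit (s : ℂ) (hs : s ∈ U) : M s * cexp (-w s) ∈ slitPlane := by
    simpa using mem_slitPlane_of_norm_lt_one ((hMw s hs).trans_lt (by linarith))
  refine ⟨fun s ↦ log (M s * cexp (-w s)), (hM.mul hw.neg.cexp).clog hslit, fun s hs ↦ ?_,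
    fun s hs ↦ ?_⟩
  · have hlog := norm_log_one_add_half_le_self ((hMw s hs).trans hε)
    rw [add_sub_cancel] at hlog
    exact hlog.trans (by gcongr; exact hMw s hs)
  · rw [Complex.exp_add, exp_log (slitPlane_ne_zero (hslit s hs)), mul_left_comm,
      ← Complex.exp_add, add_neg_cancel, Complex.exp_zero, mul_one]

lemma isBigO_sub_taylor_two {u : ℂ → ℂ} {z : ℂ} (hu : AnalyticAt ℂ u z) :
    (fun s ↦ u (z + s) - (u z + deriv u z * s + deriv (deriv u) z / 2 * s ^ 2))
      =O[𝓝 0] fun s ↦ ‖s‖ ^ 3 := by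
  refine (hu.hasFPowerSeriesAt.isBigO_sub_partialSum_pow 3).congr_left fun s ↦ ?_
  simp only [FormalMultilinearSeries.partialSum, Finset.sum_range_succ, Finset.sum_range_zero,
    FormalMultilinearSeries.ofScalars_apply_eq, iteratedDeriv_succ, iteratedDeriv_zero,
    Nat.factorial, Nat.cast_one, Nat.cast_mul, smul_eq_mul, pow_zero, pow_one, zero_add]
  push_cast
  ring

lemma exists_norm_sub_taylor_two_le {u : ℂ → ℂ} (hu : AnalyticAt ℂ u 0) {a b : ℂ}
    (hu1 : deriv u 0 = a) (hu2 : deriv (deriv u) 0 = b) {β ρ : ℝ} (hβ : 0 < β) (hρ : 0 < ρ) :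
    ∃ K > 0, ∃ δ > 0, δ ≤ ρ ∧ K * δ ≤ β ∧
      ∀ s ∈ ball (0 : ℂ) δ, ‖u s - (u 0 + a * s + b / 2 * s ^ 2)‖ ≤ K * ‖s‖ ^ 3 := by
  obtain ⟨K, hK, htaylor⟩ := (isBigO_sub_taylor_two hu).exists_pos
  obtain ⟨δ, hδ, hball⟩ := Metric.eventually_nhds_iff_ball.1 htaylor.bound
  refine ⟨K, hK, min δ (min ρ (β / K)), by positivity,
    (min_le_right _ _).trans (min_le_left _ _), ?_, fun s hs ↦ ?_⟩
  · rw [← le_div_iff₀' hK]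
    exact (min_le_right _ _).trans (min_le_right _ _)
  · simpa [hu1, hu2] using hball s (ball_subset_ball (min_le_left _ _) hs)

lemma deriv_deriv_fun_add {f g : ℂ → ℂ} {z : ℂ} (hf : AnalyticAt ℂ f z) (hg : AnalyticAt ℂ g z) :
    deriv (deriv fun s ↦ f s + g s) z = deriv (deriv f) z + deriv (deriv g) z := by
  simpa only [iteratedDeriv_succ, iteratedDeriv_zero]
    using iteratedDeriv_fun_add (n := 2) hf.contDiffAt hg.contDiffAt

lemma norm_sub_le_of_norm_le_on_ball {h : ℂ → ℂ} {c z : ℂ} {ρ B : ℝ}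
    (hd : DifferentiableOn ℂ h (ball c ρ)) (hB : ∀ s ∈ ball c ρ, ‖h s‖ ≤ B) (hz : z ∈ ball c ρ) :
    ‖h z - h c‖ ≤ 2 * B / ρ * ‖z - c‖ := by
  have hc : c ∈ ball c ρ := mem_ball_self (nonempty_ball.1 ⟨z, hz⟩)
  have hmaps : MapsTo h (ball c ρ) (closedBall (h c) (2 * B)) := fun s hs ↦ by
    rw [mem_closedBall_iff_norm]
    linarith [norm_sub_le (h s) (h c), hB s hs, hB c hc]
  simpa only [dist_eq_norm] using dist_le_div_mul_dist_of_mapsTo_ball hd hmaps hz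

lemma norm_cexp_add_sub_cexp_le (z w : ℂ) :
    ‖cexp (z + w) - cexp z‖ ≤ ‖w‖ * Real.exp (z.re + ‖w‖) := by
  rw [Complex.exp_add, ← mul_sub_one, norm_mul, norm_exp, Real.exp_add, mul_left_comm]
  gcongr
  simpa using norm_exp_sub_sum_le_norm_mul_exp w 1

end ComplexAnalysis

section Cumulants

variable {α : Type*} [MeasurableSpace α] {μ : Measure α} {X : α → ℝ} {L : ℂ → ℂ}

lemma deriv_complexMGF_zero (h0 : 0 ∈ interior (integrableExpSet X μ)) :
    deriv (complexMGF X μ) 0 = (μ[X] : ℝ) := by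
  rw [(hasDerivAt_complexMGF (z := 0) h0).deriv]
  simp [integral_complex_ofReal]

lemma deriv_deriv_complexMGF_zero (h0 : 0 ∈ interior (integrableExpSet X μ)) :
    deriv (deriv (complexMGF X μ)) 0 = (μ[X ^ 2] : ℝ) := by
  have hiter := iteratedDeriv_complexMGF (z := 0) h0 2
  rw [iteratedDeriv_succ, iteratedDeriv_one] at hiter
  rw [hiter, ← integral_complex_ofReal]
  simp

lemma deriv_complexMGF_eventuallyEq (hL : AnalyticAt ℂ L 0)
    (hML : complexMGF X μ =ᶠ[𝓝 0] fun s ↦ cexp (L s)) :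
    deriv (complexMGF X μ) =ᶠ[𝓝 0] fun s ↦ cexp (L s) * deriv L s := by
  filter_upwards [hML.eventuallyEq_nhds, hL.eventually_analyticAt] with s hs hLs
  rw [hs.deriv_eq, hLs.differentiableAt.hasDerivAt.cexp.deriv]

variable [IsProbabilityMeasure μ]

lemma cexp_eq_one_of_complexMGF_eventuallyEq
    (hML : complexMGF X μ =ᶠ[𝓝 0] fun s ↦ cexp (L s)) : cexp (L 0) = 1 := by
  simpa [complexMGF] using hML.self_of_nhds.symm

lemma deriv_eq_integral_of_complexMGF_eventuallyEq (h0 : 0 ∈ interior (integrableExpSet X μ))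
    (hL : AnalyticAt ℂ L 0) (hML : complexMGF X μ =ᶠ[𝓝 0] fun s ↦ cexp (L s)) :
    deriv L 0 = (μ[X] : ℝ) := by
  have hderiv : deriv (complexMGF X μ) 0 = cexp (L 0) * deriv L 0 :=
    (deriv_complexMGF_eventuallyEq hL hML).self_of_nhds
  rw [← deriv_complexMGF_zero h0, hderiv, cexp_eq_one_of_complexMGF_eventuallyEq hML, one_mul]

lemma deriv_deriv_eq_variance_of_complexMGF_eventuallyEq
    (h0 : 0 ∈ interior (integrableExpSet X μ))
    (hL : AnalyticAt ℂ L 0) (hML : complexMGF X μ =ᶠ[𝓝 0] fun s ↦ cexp (L s)) :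
    deriv (deriv L) 0 = (Var[X; μ] : ℝ) := by
  have hderiv : deriv (deriv (complexMGF X μ)) 0
      = cexp (L 0) * deriv L 0 * deriv L 0 + cexp (L 0) * deriv (deriv L) 0 := by
    rw [(deriv_complexMGF_eventuallyEq hL hML).deriv_eq]
    exact (hL.differentiableAt.hasDerivAt.cexp.mul hL.deriv.differentiableAt.hasDerivAt).deriv
  rw [deriv_deriv_complexMGF_zero h0, cexp_eq_one_of_complexMGF_eventuallyEq hML, one_mul, one_mul,
    deriv_eq_integral_of_complexMGF_eventuallyEq h0 hL hML] at hderiv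
  rw [variance_eq_sub (memLp_of_mem_interior_integrableExpSet h0 2)]
  push_cast
  rw [hderiv]
  ring

variable {w ℓ : ℂ → ℂ} {R ε m : ℝ}

lemma abs_integral_sub_le_of_complexMGF_eventuallyEq (hR : 0 < R)
    (h0 : 0 ∈ interior (integrableExpSet X μ)) (hw : AnalyticAt ℂ w 0)
    (hℓ : DiffContOnCl ℂ ℓ (ball 0 R)) (hℓε : ∀ s ∈ sphere (0 : ℂ) R, ‖ℓ s‖ ≤ ε)
    (hM : complexMGF X μ =ᶠ[𝓝 0] fun s ↦ cexp (w s + ℓ s)) (hm : deriv w 0 = m) :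
    |μ[X] - m| ≤ ε / R := by
  have hℓ0 : AnalyticAt ℂ ℓ 0 := hℓ.differentiableOn.analyticAt (ball_mem_nhds 0 hR)
  have hmean := deriv_eq_integral_of_complexMGF_eventuallyEq h0 (hw.fun_add hℓ0) hM
  rw [deriv_fun_add hw.differentiableAt hℓ0.differentiableAt, hm, ← eq_sub_iff_add_eq'] at hmean
  have hcauchy := norm_deriv_le_of_forall_mem_sphere_norm_le hR hℓ hℓε
  rwa [hmean, ← ofReal_sub, norm_real] at hcauchy

lemma abs_variance_sub_le_of_complexMGF_eventuallyEq (hR : 0 < R)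
    (h0 : 0 ∈ interior (integrableExpSet X μ)) (hw : AnalyticAt ℂ w 0)
    (hℓ : DiffContOnCl ℂ ℓ (ball 0 R)) (hℓε : ∀ s ∈ sphere (0 : ℂ) R, ‖ℓ s‖ ≤ ε)
    (hM : complexMGF X μ =ᶠ[𝓝 0] fun s ↦ cexp (w s + ℓ s)) (hm : deriv (deriv w) 0 = m) :
    |Var[X; μ] - m| ≤ 2 * ε / R ^ 2 := by
  have hℓ0 : AnalyticAt ℂ ℓ 0 := hℓ.differentiableOn.analyticAt (ball_mem_nhds 0 hR)
  have hvar := deriv_deriv_eq_variance_of_complexMGF_eventuallyEq h0 (hw.fun_add hℓ0) hM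
  rw [deriv_deriv_fun_add hw hℓ0, hm, ← eq_sub_iff_add_eq'] at hvar
  have hcauchy := norm_iteratedDeriv_le_of_forall_mem_sphere_norm_le 2 hR hℓ hℓε
  rwa [iteratedDeriv_succ, iteratedDeriv_one, hvar, ← ofReal_sub, norm_real, Nat.factorial_two,
    Nat.cast_two] at hcauchy

end Cumulants

section LimitLaw

/-- The deviation of the exponent `u φ + h` from the quadratic polynomial
`u(0) φ + h(0) + a φ s + b φ s² / 2` of a Gaussian law with mean `a φ` and variance `b φ`. -/
noncomputable def gaussianRemainder (u h : ℂ → ℂ) (a b φ : ℝ) (s : ℂ) : ℂ :=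
  (u s - (u 0 + a * s + b / 2 * s ^ 2)) * φ + (h s - h 0)

variable {u h : ℂ → ℂ} {a b φ ρ B K δ : ℝ} {s : ℂ}

lemma norm_gaussianRemainder_le (hφ : 0 ≤ φ)
    (hu : ‖u s - (u 0 + a * s + b / 2 * s ^ 2)‖ ≤ K * ‖s‖ ^ 3)
    (hh : DifferentiableOn ℂ h (ball 0 ρ)) (hB : ∀ s ∈ ball 0 ρ, ‖h s‖ ≤ B) (hs : s ∈ ball 0 ρ) :
    ‖gaussianRemainder u h a b φ s‖ ≤ (K * ‖s‖ ^ 2 * φ + 2 * B / ρ) * ‖s‖ := by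
  have hschwarz := norm_sub_le_of_norm_le_on_ball hh hB hs
  rw [sub_zero] at hschwarz
  calc ‖gaussianRemainder u h a b φ s‖ ≤ K * ‖s‖ ^ 3 * φ + 2 * B / ρ * ‖s‖ := by
        refine norm_add_le_of_le ?_ hschwarz
        rw [norm_mul, norm_real, Real.norm_of_nonneg hφ]
        gcongr
    _ = (K * ‖s‖ ^ 2 * φ + 2 * B / ρ) * ‖s‖ := by ring

lemma norm_gaussianRemainder_le_add (hφ : 0 ≤ φ) (hK : K * ‖s‖ ≤ b / 4)
    (hu : ‖u s - (u 0 + a * s + b / 2 * s ^ 2)‖ ≤ K * ‖s‖ ^ 3) (h0 : ‖h 0‖ ≤ B) (hs : ‖h s‖ ≤ B) :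
    ‖gaussianRemainder u h a b φ s‖ ≤ b * φ * ‖s‖ ^ 2 / 4 + 2 * B := by
  refine norm_add_le_of_le ?_ (by linarith [norm_sub_le (h s) (h 0)])
  rw [norm_mul, norm_real, Real.norm_of_nonneg hφ]
  calc ‖u s - (u 0 + a * s + b / 2 * s ^ 2)‖ * φ ≤ K * ‖s‖ ^ 3 * φ := by gcongr
    _ = K * ‖s‖ * (‖s‖ ^ 2 * φ) := by ring
    _ ≤ b / 4 * (‖s‖ ^ 2 * φ) := by gcongr
    _ = b * φ * ‖s‖ ^ 2 / 4 := by ring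

lemma norm_cexp_neg_sq_div_two_add_sub_le {P Q t r : ℝ} {w : ℂ} (hP : 0 ≤ P) (hQ : 0 ≤ Q)
    (ht : 0 ≤ t) (hw : ‖w‖ ≤ (P * r ^ 2 + Q) * t) (hw' : ‖w‖ ≤ r ^ 2 / 4 + B) :
    ‖cexp (-(r ^ 2 / 2) + w) - cexp (-(r ^ 2 / 2))‖
      ≤ (P + Q) * t * Real.exp B * ((1 + r ^ 2) * Real.exp (-(1 / 4) * r ^ 2)) := by
  have hre : (-(r ^ 2 / 2 : ℂ)).re = -(r ^ 2 / 2) := by norm_cast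
  have hexp : Real.exp (-(r ^ 2 / 2) + ‖w‖) ≤ Real.exp (B + -(1 / 4) * r ^ 2) :=
    Real.exp_le_exp.2 (by linarith)
  have hPQ : P * r ^ 2 + Q ≤ (P + Q) * (1 + r ^ 2) := by
    have hcross : 0 ≤ P + Q * r ^ 2 := by positivity
    linarith
  calc ‖cexp (-(r ^ 2 / 2) + w) - cexp (-(r ^ 2 / 2))‖
      ≤ ‖w‖ * Real.exp (-(r ^ 2 / 2) + ‖w‖) := hre ▸ norm_cexp_add_sub_cexp_le _ w
    _ ≤ (P * r ^ 2 + Q) * t * Real.exp (B + -(1 / 4) * r ^ 2) := by gcongr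
    _ ≤ (P + Q) * (1 + r ^ 2) * t * Real.exp (B + -(1 / 4) * r ^ 2) := by gcongr
    _ = (P + Q) * t * Real.exp B * ((1 + r ^ 2) * Real.exp (-(1 / 4) * r ^ 2)) := by
        rw [Real.exp_add]
        ring

variable {α : Type*} [MeasurableSpace α] {μ : Measure α} {X : α → ℝ}

lemma charFun_map_sub_div (hX : AEMeasurable X μ) (m σ r : ℝ) :
    charFun (μ.map fun ω ↦ (X ω - m) / σ) r
      = cexp (-(m * (r / σ * I))) * complexMGF X μ (r / σ * I) := by
  rw [charFun_apply_real, integral_map ((hX.sub_const m).div_const σ) (by fun_prop), complexMGF,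
    ← integral_const_mul]
  congr with ω
  rw [← Complex.exp_add]
  congr 1
  push_cast
  ring

variable [IsProbabilityMeasure μ]

lemma charFun_map_sub_div_sqrt_eq_cexp (hX : AEMeasurable X μ) (hbφ : 0 < b * φ)
    (hM0 : complexMGF X μ 0 = cexp (u 0 * φ + h 0)) {r : ℝ} (hs : s = r / √(b * φ) * I)
    (hM : complexMGF X μ s = cexp (u s * φ + h s)) :
    charFun (μ.map fun ω ↦ (X ω - a * φ) / √(b * φ)) r
      = cexp (-(r ^ 2 / 2) + gaussianRemainder u h a b φ s) := by
  have hone : cexp (u 0 * φ + h 0) = 1 := by simpa [complexMGF] using hM0.symm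
  have hsq : (r : ℂ) ^ 2 = -(b * φ * s ^ 2) := by
    have hσ : (√(b * φ) : ℂ) ^ 2 = b * φ := by exact_mod_cast Real.sq_sqrt hbφ.le
    have hσ0 : (√(b * φ) : ℂ) ≠ 0 := by exact_mod_cast (Real.sqrt_pos.2 hbφ).ne'
    rw [hs, mul_pow, I_sq, div_pow, ← hσ]
    field_simp
  rw [charFun_map_sub_div hX, ← hs, hM, ← mul_one (cexp (-_ + _)), ← hone, ← Complex.exp_add,
    ← Complex.exp_add, hsq, gaussianRemainder]
  congr 1
  push_cast
  ring

variable (hb : 0 < b) (hφ : 0 < φ) (hK : 0 ≤ K) (hKδ : K * δ ≤ b / 4) (hδρ : δ ≤ ρ)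
  (hu : ∀ s ∈ ball (0 : ℂ) δ, ‖u s - (u 0 + a * s + b / 2 * s ^ 2)‖ ≤ K * ‖s‖ ^ 3)
  (hh : DifferentiableOn ℂ h (ball 0 ρ)) (hB : ∀ s ∈ ball 0 ρ, ‖h s‖ ≤ B)
  (hM : ∀ s ∈ ball 0 ρ, complexMGF X μ s = cexp (u s * φ + h s))
include hb hφ hK hKδ hδρ hu hh hB hM

lemma norm_charFun_map_sub_charFun_gaussianReal_div_le (hX : AEMeasurable X μ) {r : ℝ}
    (hr : 0 < r) (hrδ : r < δ * √(b * φ)) :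
    ‖charFun (μ.map fun ω ↦ (X ω - a * φ) / √(b * φ)) r - charFun (gaussianReal 0 1) r‖ / r
      ≤ (K / b + 2 * B / ρ) * Real.exp (2 * B) / √(b * φ)
        * ((1 + r ^ 2) * Real.exp (-(1 / 4) * r ^ 2)) := by
  have hbφ : 0 < b * φ := mul_pos hb hφ
  have hσ : 0 < √(b * φ) := Real.sqrt_pos.2 hbφ
  obtain ⟨s, hs⟩ : ∃ s : ℂ, s = r / √(b * φ) * I := ⟨_, rfl⟩
  have hnorm : ‖s‖ = r / √(b * φ) := by
    rw [hs, norm_mul, norm_I, mul_one, ← ofReal_div, norm_real, Real.norm_of_nonneg (by positivity)]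
  have hr2 : b * φ * ‖s‖ ^ 2 = r ^ 2 := by
    rw [hnorm, div_pow, Real.sq_sqrt hbφ.le, mul_div_cancel₀ _ hbφ.ne']
  have hsδ : ‖s‖ < δ := by rwa [hnorm, div_lt_iff₀ hσ]
  have hρ : 0 < ρ := (norm_nonneg s).trans_lt (hsδ.trans_le hδρ)
  have hsρ : s ∈ ball 0 ρ := mem_ball_zero_iff.2 (hsδ.trans_le hδρ)
  have h0ρ : (0 : ℂ) ∈ ball 0 ρ := mem_ball_self hρ
  have hB0 : 0 ≤ B := (norm_nonneg _).trans (hB 0 h0ρ)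
  have hus := hu s (mem_ball_zero_iff.2 hsδ)
  have hw := norm_gaussianRemainder_le hφ.le hus hh hB hsρ
  have hw' := norm_gaussianRemainder_le_add hφ.le
    ((mul_le_mul_of_nonneg_left hsδ.le hK).trans hKδ) hus (hB 0 h0ρ) (hB s hsρ)
  rw [hr2] at hw'
  have hcubic : K * ‖s‖ ^ 2 * φ = K / b * r ^ 2 := by
    rw [← hr2]
    field_simp
  rw [hcubic] at hw
  rw [charFun_map_sub_div_sqrt_eq_cexp hX hbφ (hM 0 h0ρ) hs (hM s hsρ), charFun_gaussianReal,
    div_le_iff₀ hr]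
  convert! norm_cexp_neg_sq_div_two_add_sub_le (by positivity) (by positivity) (norm_nonneg s)
    hw hw' using 1
  · simp
  · rw [hnorm]
    ring

lemma integral_norm_charFun_map_sub_charFun_gaussianReal_div_le (hδ : 0 < δ)
    (hX : Integrable X μ) :
    ∫ r in 0..δ * √(b * φ),
        ‖charFun (μ.map fun ω ↦ (X ω - a * φ) / √(b * φ)) r - charFun (gaussianReal 0 1) r‖ / r
      ≤ (K / b + 2 * B / ρ) * Real.exp (2 * B) / √(b * φ)
        * ∫ r : ℝ, (1 + r ^ 2) * Real.exp (-(1 / 4) * r ^ 2) := by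
  have hT : 0 ≤ δ * √(b * φ) := by positivity
  have hY : Integrable (fun ω ↦ (X ω - a * φ) / √(b * φ)) μ :=
    (hX.sub (integrable_const _)).div_const _
  have : IsProbabilityMeasure (μ.map fun ω ↦ (X ω - a * φ) / √(b * φ)) :=
    Measure.isProbabilityMeasure_map hY.aemeasurable
  have hdom : Integrable fun r : ℝ ↦ (K / b + 2 * B / ρ) * Real.exp (2 * B) / √(b * φ)
      * ((1 + r ^ 2) * Real.exp (-(1 / 4) * r ^ 2)) :=
    (integrable_one_add_sq_mul_exp_neg_mul_sq (by norm_num)).const_mul _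
  rw [← integral_const_mul]
  refine (intervalIntegral.integral_mono_on_of_le_Ioo hT
    (intervalIntegrable_norm_charFun_sub_div
      ((integrable_map_measure aestronglyMeasurable_id hY.aemeasurable).2 hY)
      ((memLp_id_gaussianReal 1).integrable le_rfl) hT) hdom.intervalIntegrable fun r hr ↦
      norm_charFun_map_sub_charFun_gaussianReal_div_le hb hφ hK hKδ hδρ hu hh hB hM hX.aemeasurable
        hr.1 hr.2).trans ?_
  rw [intervalIntegral.integral_of_le hT]
  have hρ : 0 < ρ := hδ.trans_le hδρ
  have hB0 : 0 ≤ B := (norm_nonneg _).trans (hB 0 (mem_ball_self hρ))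
  exact setIntegral_le_integral hdom (.of_forall fun r ↦ by positivity)

end LimitLaw

lemma exists_abs_measureReal_sub_stdNormalCDF_le {u : ℂ → ℂ} (hu : AnalyticAt ℂ u 0) {a b : ℝ}
    (hu1 : deriv u 0 = a) (hu2 : deriv (deriv u) 0 = b) (hb : 0 < b) {ρ B : ℝ} (hρ : 0 < ρ)
    (hB : 0 ≤ B) :
    ∃ C > 0, ∀ {α : Type*} [MeasurableSpace α] (μ : Measure α) [IsProbabilityMeasure μ]
      (X : α → ℝ) (h : ℂ → ℂ) (φ : ℝ), Integrable X μ → 0 < φ → DifferentiableOn ℂ h (ball 0 ρ) →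
      (∀ s ∈ ball 0 ρ, ‖h s‖ ≤ B) →
      (∀ s ∈ ball 0 ρ, complexMGF X μ s = cexp (u s * φ + h s)) → ∀ x,
      |μ.real {ω | (X ω - a * φ) / √(b * φ) < x} - stdNormalCDF x| ≤ C / √φ := by
  obtain ⟨K, hK, δ, hδ, hδρ, hKδ, htaylor⟩ :=
    exists_norm_sub_taylor_two_le hu hu1 hu2 (div_pos hb four_pos) hρ
  obtain ⟨C₁, hC₁, hesseen⟩ := exists_abs_cdfDiff_le_integral_norm_charFun_sub
  set c : ℝ≥0 := (√(2 * Real.pi * (1 : ℝ≥0)))⁻¹.toNNReal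
  set J : ℝ := ∫ r : ℝ, (1 + r ^ 2) * Real.exp (-(1 / 4) * r ^ 2)
  have hJ : 0 ≤ J := integral_nonneg fun r ↦ by positivity
  have hc : 0 < c := Real.toNNReal_pos.2 (by positivity)
  refine ⟨C₁ * ((K / b + 2 * B / ρ) * Real.exp (2 * B) * J + c / δ) / √b, by positivity,
    fun {α} _ μ _ X h φ hX hφ hh hhB hM x ↦ ?_⟩
  set Y : α → ℝ := fun ω ↦ (X ω - a * φ) / √(b * φ)
  have hY : Integrable Y μ := (hX.sub (integrable_const _)).div_const _
  have : IsProbabilityMeasure (μ.map Y) := Measure.isProbabilityMeasure_map hY.aemeasurable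
  have hsmooth := hesseen (μ.map Y) (gaussianReal 0 1) c (δ * √(b * φ))
    ((integrable_map_measure aestronglyMeasurable_id hY.aemeasurable).2 hY)
    ((memLp_id_gaussianReal 1).integrable le_rfl)
    (lipschitzWith_gaussianReal_real_Iio 0 one_ne_zero) (by positivity) x
  rw [cdfDiff, map_measureReal_apply_of_aemeasurable hY.aemeasurable measurableSet_Iio,
    ← stdNormalCDF_eq_gaussianReal_real_Iio] at hsmooth
  refine hsmooth.trans ?_
  calc _ ≤ C₁ * ((K / b + 2 * B / ρ) * Real.exp (2 * B) / √(b * φ) * J + c / (δ * √(b * φ))) := by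
        gcongr
        exact integral_norm_charFun_map_sub_charFun_gaussianReal_div_le hb hφ hK.le hKδ hδρ htaylor
          hh hhB hM hδ hX
    _ = _ := by
        rw [Real.sqrt_mul hb.le]
        field_simp

section QuasiPower

lemma differentiableOn_complexMGF_ball {α : Type*} [MeasurableSpace α] {μ : Measure α} {X : α → ℝ}
    {τ : ℝ} (hX : Ioo (-τ) τ ⊆ integrableExpSet X μ) :
    DifferentiableOn ℂ (complexMGF X μ) (ball 0 τ) :=
  differentiableOn_complexMGF.mono fun s hs ↦ interior_maximal hX isOpen_Ioo
    (abs_lt.1 ((abs_re_le_norm s).trans_lt (mem_ball_zero_iff.1 hs)))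

lemma zero_mem_interior_integrableExpSet {α : Type*} [MeasurableSpace α] {μ : Measure α}
    {X : α → ℝ} {τ : ℝ} (hτ : 0 < τ) (hX : Ioo (-τ) τ ⊆ integrableExpSet X μ) :
    0 ∈ interior (integrableExpSet X μ) :=
  interior_maximal hX isOpen_Ioo ⟨neg_neg_of_pos hτ, hτ⟩

lemma Ioo_subset_integrableExpSet_of_integrable_cexp {α : Type*} [MeasurableSpace α]
    {μ : Measure α} {X : α → ℝ} {τ : ℝ}
    (h : ∀ s ∈ ball (0 : ℂ) τ, Integrable (fun ω ↦ cexp (X ω * s)) μ) :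
    Ioo (-τ) τ ⊆ integrableExpSet X μ := fun t ht ↦ by
  have ht' : (t : ℂ) ∈ ball 0 τ := by
    rw [mem_ball_zero_iff, norm_real]
    exact abs_lt.2 ht
  refine (h t ht').norm.congr (.of_forall fun ω ↦ ?_)
  simp [norm_exp, mul_comm]

lemma deriv_mul_const_add {u v : ℂ → ℂ} (hu : AnalyticAt ℂ u 0) (hv : AnalyticAt ℂ v 0)
    {a c φ : ℝ} (hu1 : deriv u 0 = a) (hv1 : deriv v 0 = c) :
    deriv (fun s ↦ u s * φ + v s) 0 = (a * φ + c : ℝ) := by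
  rw [deriv_fun_add (hu.differentiableAt.mul_const _) hv.differentiableAt, deriv_mul_const_field,
    hu1, hv1]
  norm_cast

lemma deriv_deriv_mul_const_add {u v : ℂ → ℂ} (hu : AnalyticAt ℂ u 0) (hv : AnalyticAt ℂ v 0)
    {b e φ : ℝ} (hu2 : deriv (deriv u) 0 = b) (hv2 : deriv (deriv v) 0 = e) :
    deriv (deriv fun s ↦ u s * φ + v s) 0 = (b * φ + e : ℝ) := by
  rw [deriv_deriv_fun_add (hu.fun_mul analyticAt_const) hv, deriv_mul_const_field',
    deriv_mul_const_field, hu2, hv2]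
  norm_cast

variable {ι : Type*} {l : Filter ι} {α : ι → Type*} [∀ i, MeasurableSpace (α i)]
  {μ : ∀ i, Measure (α i)} {X : ∀ i, α i → ℝ} {τ : ℝ} {u v : ℂ → ℂ} {φ κ : ι → ℝ}

lemma exists_eventually_complexMGF_eq_cexp_add
    (hu : DifferentiableOn ℂ u (ball 0 τ)) (hv : DifferentiableOn ℂ v (ball 0 τ))
    (hκ : Tendsto κ l atTop) (hX : ∀ᶠ i in l, Ioo (-τ) τ ⊆ integrableExpSet (X i) (μ i))
    (hM : ∃ C, ∀ᶠ i in l, ∀ s ∈ ball 0 τ,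
      ‖complexMGF (X i) (μ i) s * cexp (-(u s * φ i + v s)) - 1‖ ≤ C / κ i) :
    ∃ C > 0, ∀ᶠ i in l, C / κ i ≤ 1 ∧ ∃ ℓ : ℂ → ℂ, DifferentiableOn ℂ ℓ (ball 0 τ) ∧
      (∀ s ∈ ball 0 τ, ‖ℓ s‖ ≤ C / κ i) ∧
      ∀ s ∈ ball 0 τ, complexMGF (X i) (μ i) s = cexp (u s * φ i + v s + ℓ s) := by
  obtain ⟨C₀, hC₀⟩ := hM
  refine ⟨3 / 2 * max C₀ 1, by positivity, ?_⟩
  filter_upwards [hX, hC₀, hκ.eventually_ge_atTop (2 * max C₀ 1)] with i hXi hMi hκi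
  have hκ0 : 0 < κ i := lt_of_lt_of_le (by positivity) hκi
  have hε : max C₀ 1 / κ i ≤ 1 / 2 := by
    rw [div_le_iff₀ hκ0]
    linarith
  rw [mul_div_assoc]
  refine ⟨by linarith, exists_eq_cexp_add (differentiableOn_complexMGF_ball hXi)
    ((hu.mul_const _).fun_add hv) hε fun s hs ↦ (hMi s hs).trans ?_⟩
  gcongr
  exact le_max_left _ _

variable [∀ i, IsProbabilityMeasure (μ i)]

theorem quasi_power_theorem_general (hτ : 0 < τ) (hu : DifferentiableOn ℂ u (ball 0 τ))
    (hv : DifferentiableOn ℂ v (ball 0 τ)) {a b c e : ℝ} (hu1 : deriv u 0 = a)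
    (hu2 : deriv (deriv u) 0 = b) (hb : 0 < b) (hv1 : deriv v 0 = c) (hv2 : deriv (deriv v) 0 = e)
    (hφ : ∀ᶠ i in l, 0 < φ i) (hκ : Tendsto κ l atTop)
    (hX : ∀ᶠ i in l, Ioo (-τ) τ ⊆ integrableExpSet (X i) (μ i))
    (hM : ∃ C, ∀ᶠ i in l, ∀ s ∈ ball 0 τ,
      ‖complexMGF (X i) (μ i) s * cexp (-(u s * φ i + v s)) - 1‖ ≤ C / κ i) :
    (∃ C > 0, ∀ᶠ i in l, ∀ x,
      |(μ i).real {ω | (X i ω - a * φ i) / √(b * φ i) < x} - stdNormalCDF x| ≤ C / √(φ i)) ∧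
    (∃ C > 0, ∀ᶠ i in l, |(μ i)[X i] - (a * φ i + c)| ≤ C / κ i) ∧
    (∃ C > 0, ∀ᶠ i in l, |Var[X i; μ i] - (b * φ i + e)| ≤ C / κ i) := by
  have hR : 0 < τ / 2 := half_pos hτ
  have hsub : closedBall (0 : ℂ) (τ / 2) ⊆ ball 0 τ := closedBall_subset_ball (half_lt_self hτ)
  have hu0 := hu.analyticAt (ball_mem_nhds 0 hτ)
  have hv0 := hv.analyticAt (ball_mem_nhds 0 hτ)
  have hw (i : ι) : AnalyticAt ℂ (fun s ↦ u s * φ i + v s) 0 :=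
    (hu0.fun_mul analyticAt_const).fun_add hv0
  obtain ⟨C, hC, hlog⟩ := exists_eventually_complexMGF_eq_cexp_add hu hv hκ hX hM
  refine ⟨?_, ⟨C / (τ / 2), by positivity, ?_⟩, ⟨2 * C / (τ / 2) ^ 2, by positivity, ?_⟩⟩
  · obtain ⟨B, hB⟩ := (isCompact_closedBall (0 : ℂ) (τ / 2)).exists_bound_of_continuousOn
      (hv.continuousOn.mono hsub)
    have hB0 : 0 ≤ B := (norm_nonneg _).trans (hB 0 (mem_closedBall_self hR.le))
    obtain ⟨C', hC', hclt⟩ := exists_abs_measureReal_sub_stdNormalCDF_le hu0 hu1 hu2 hb hR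
      (add_nonneg hB0 zero_le_one)
    refine ⟨C', hC', ?_⟩
    filter_upwards [hφ, hX, hlog] with i hφi hXi ⟨hC1, ℓ, hℓ, hℓC, hMℓ⟩
    have hball := ball_subset_closedBall.trans hsub
    refine hclt (μ i) (X i) (fun s ↦ v s + ℓ s) (φ i) (integrable_of_mem_interior_integrableExpSet
      (zero_mem_interior_integrableExpSet hτ hXi)) hφi ((hv.fun_add hℓ).mono hball) (fun s hs ↦
        norm_add_le_of_le (hB s (ball_subset_closedBall hs)) ((hℓC s (hball hs)).trans hC1))
      fun s hs ↦ by rw [hMℓ s (hball hs), add_assoc]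
  all_goals
    filter_upwards [hX, hlog] with i hXi ⟨_, ℓ, hℓ, hℓC, hMℓ⟩
    have h0 := zero_mem_interior_integrableExpSet hτ hXi
    have hMℓ' := eventually_of_mem (ball_mem_nhds 0 hτ) hMℓ
    have hℓC' (s : ℂ) (hs : s ∈ sphere 0 (τ / 2)) := hℓC s (hsub (sphere_subset_closedBall hs))
  · rw [div_right_comm]
    exact abs_integral_sub_le_of_complexMGF_eventuallyEq hR h0 (hw i) (hℓ.diffContOnCl_ball hsub)
      hℓC' hMℓ' (deriv_mul_const_add hu0 hv0 hu1 hv1)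
  · rw [div_right_comm, mul_div_assoc]
    exact abs_variance_sub_le_of_complexMGF_eventuallyEq hR h0 (hw i) (hℓ.diffContOnCl_ball hsub)
      hℓC' hMℓ' (deriv_deriv_mul_const_add hu0 hv0 hu2 hv2)

end QuasiPower

/-- **Quasi power theorem of Hwang.**  Let `(Ω_n)` be a sequence of integer-valued random
variables whose moment generating functions `M_n(s) = E(e^{Ω_n s})` exist for `|s| ≤ τ`
and satisfy `M_n(s) = e^{u(s)φ(n) + v(s)}(1 + O(κ_n^{−1}))` uniformly for `|s| ≤ τ`,
where `u, v` are analytic on the closed disk `|s| ≤ τ` and independent of `n`, `u'(0)`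
and `u''(0)` are real with `u''(0) > 0`, `φ(n) → ∞`, `φ(n) > 0` and `κ_n → ∞`.  Then the
distribution of `Ω_n` is asymptotically Gaussian,
`P{(Ω_n − u'(0)φ(n))/√(u''(0)φ(n)) < x} = Φ_N(x) + O(1/κ_n + 1/√(φ(n)))` uniformly in
`x`, and `E(Ω_n) = u'(0)φ(n) + v'(0) + O(κ_n^{−1})`,
`V(Ω_n) = u''(0)φ(n) + v''(0) + O(κ_n^{−1})`. -/
theorem quasi_power_theorem
    {α : ℕ → Type*} [∀ n, MeasurableSpace (α n)]
    (μ : ∀ n, Measure (α n)) [∀ n, IsProbabilityMeasure (μ n)]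
    (X : ∀ n, α n → ℤ) (hX : ∀ n, Measurable (X n))
    (τ : ℝ) (hτ : 0 < τ)
    (u v : ℂ → ℂ)
    (hu : AnalyticOnNhd ℂ u (Metric.closedBall 0 τ))
    (hv : AnalyticOnNhd ℂ v (Metric.closedBall 0 τ))
    (a b c e : ℝ)
    (hu1 : deriv u 0 = (a : ℂ)) (hu2 : deriv (deriv u) 0 = (b : ℂ)) (hb : 0 < b)
    (hv1 : deriv v 0 = (c : ℂ)) (hv2 : deriv (deriv v) 0 = (e : ℂ))
    (φ : ℕ → ℝ) (hφpos : ∀ n, 0 < φ n)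
    (hφ : Filter.Tendsto φ Filter.atTop Filter.atTop)
    (κ : ℕ → ℝ) (hκ : Filter.Tendsto κ Filter.atTop Filter.atTop)
    (hMexists : ∀ n : ℕ, ∀ s : ℂ, ‖s‖ ≤ τ →
      Integrable (fun ω => Complex.exp ((X n ω : ℂ) * s)) (μ n))
    (hMasymp : ∃ C₀ : ℝ, ∀ n : ℕ, ∀ s : ℂ, ‖s‖ ≤ τ →
      ‖(∫ ω, Complex.exp ((X n ω : ℂ) * s) ∂(μ n))
          * Complex.exp (-(u s * (φ n : ℂ) + v s)) - 1‖ ≤ C₀ / κ n) :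
    (∃ C > (0 : ℝ), ∃ N : ℕ, ∀ n : ℕ, N ≤ n → ∀ x : ℝ,
      |((μ n) {ω | ((X n ω : ℝ) - a * φ n) / Real.sqrt (b * φ n) < x}).toReal
          - stdNormalCDF x|
        ≤ C * (1 / κ n + 1 / Real.sqrt (φ n))) ∧
    (∃ C > (0 : ℝ), ∃ N : ℕ, ∀ n : ℕ, N ≤ n →
      |(∫ ω, (X n ω : ℝ) ∂(μ n)) - (a * φ n + c)| ≤ C / κ n) ∧
    (∃ C > (0 : ℝ), ∃ N : ℕ, ∀ n : ℕ, N ≤ n →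
      |((∫ ω, (X n ω : ℝ) ^ 2 ∂(μ n)) - (∫ ω, (X n ω : ℝ) ∂(μ n)) ^ 2)
          - (b * φ n + e)| ≤ C / κ n) := by
  have hball : ball (0 : ℂ) τ ⊆ closedBall 0 τ := ball_subset_closedBall
  have hint (n : ℕ) : Ioo (-τ) τ ⊆ integrableExpSet (fun ω ↦ (X n ω : ℝ)) (μ n) :=
    Ioo_subset_integrableExpSet_of_integrable_cexp fun s hs ↦ by
      simpa using hMexists n s (mem_ball_zero_iff.1 hs).le
  have hM : ∃ C, ∀ᶠ n in atTop, ∀ s ∈ ball 0 τ,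
      ‖complexMGF (fun ω ↦ (X n ω : ℝ)) (μ n) s * cexp (-(u s * φ n + v s)) - 1‖ ≤ C / κ n :=
    hMasymp.imp fun C hC ↦ .of_forall fun n s hs ↦ by
      simpa [complexMGF, mul_comm s] using hC n s (mem_ball_zero_iff.1 hs).le
  obtain ⟨⟨C, hC, hcdf⟩, ⟨C₁, hC₁, hmean⟩, ⟨C₂, hC₂, hvar⟩⟩ := quasi_power_theorem_general hτ
    (hu.differentiableOn.mono hball) (hv.differentiableOn.mono hball) hu1 hu2 hb hv1 hv2
    (.of_forall hφpos) hκ (.of_forall hint) hM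
  refine ⟨⟨C, hC, eventually_atTop.1 ?_⟩, ⟨C₁, hC₁, eventually_atTop.1 hmean⟩,
    ⟨C₂, hC₂, eventually_atTop.1 ?_⟩⟩
  · filter_upwards [hcdf, hκ.eventually_gt_atTop 0] with n hn hκn x
    refine (hn x).trans ?_
    rw [div_eq_mul_one_div]
    gcongr
    exact le_add_of_nonneg_left (one_div_nonneg.2 hκn.le)
  · filter_upwards [hvar] with n hn
    rwa [variance_eq_sub (memLp_of_mem_interior_integrableExpSet
      (zero_mem_interior_integrableExpSet hτ (hint n)) 2)] at hn
end

section
/- Let u > −1 and z ∈ [0,1) be real numbers with z(1+u) < 1. Then the function v ↦ F(z,u,v) is twice differentiable at v = 1, and its second derivative there equals M₂(z,u) := −(8u/(1−z)²)·∫₀^z (1/(1−t(1+u)))·log(1/(1−t)) dt + 4u(1+u)²(1−z+2u−uz)/(1−z(1+u))³·log²(1/(1−z)) + 12u/((1−z)²(1+u)²)·log(1/(1−z(1+u))) + 4u·Ψ₁/((1−z)(1−z(1+u))³)·log(1/(1−z)) + 2u²z·Ψ₂/((1−z)²(1−z(1+u))³(1+u)), where Ψ₁ := −z²u² − 3z²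 − 5z²u + u³z² + 6z + 9zu + 2u²z − u³z − 3u² − 4u − 3 and Ψ₂ := −z³u³ + 3u³z² − 2u³z − 19u²z + 22z²u² + 6u² − 3z³u² + 14u − 3z³u − 46zu + 35z²u + 14 − 29z − z³ + 16z². -/
/-- `Ω = √(1 − 4(1+u)v(1−v))`. -/
noncomputable def OmegaR (u v : ℝ) : ℝ := Real.sqrt (1 - 4 * (1 + u) * v * (1 - v))

/-- The denominator of `Φ(z,u,v)`:
`(Ω + 1 − 2v(1+u) + (1−z)^Ω·(Ω − 1 + 2v(1+u)))·(1−z)`, with `(1−z)^Ω = exp(Ω·log(1−z))`. -/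
noncomputable def denPhi (z u v : ℝ) : ℝ :=
  (OmegaR u v + 1 - 2 * v * (1 + u)
    + Real.exp (OmegaR u v * Real.log (1 - z)) * (OmegaR u v - 1 + 2 * v * (1 + u)))
    * (1 - z)

/-- The explicit solution (4):
`Φ(z,u,v) = (Ω + 1 − 2v + (1−z)^Ω·(Ω − 1 + 2v)) / ((Ω + 1 − 2v(1+u) + (1−z)^Ω·(Ω − 1 + 2v(1+u)))·(1−z))`. -/
noncomputable def PhiR (z u v : ℝ) : ℝ :=
  (OmegaR u v + 1 - 2 * v
    + Real.exp (OmegaR u v * Real.log (1 - z)) * (OmegaR u v - 1 + 2 * v))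
    / denPhi z u v

/-- The function (6):
`F(z,u,v) = (1 + 2z(v−1))/(1−z)² + (1−z)^{−2}·∫₀^z (∂Φ/∂t − (2v/(1−t))·Φ)·(1−t)² dt`. -/
noncomputable def FR (z u v : ℝ) : ℝ :=
  (1 + 2 * z * (v - 1)) / (1 - z) ^ 2
    + ((1 - z) ^ 2)⁻¹ * ∫ t in (0 : ℝ)..z,
        (deriv (fun s => PhiR s u v) t - 2 * v / (1 - t) * PhiR t u v) * (1 - t) ^ 2

/-- `Ψ₁` of formula (9). -/
noncomputable def Psi1 (z u : ℝ) : ℝ :=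
  -z ^ 2 * u ^ 2 - 3 * z ^ 2 - 5 * z ^ 2 * u + u ^ 3 * z ^ 2 + 6 * z + 9 * z * u
    + 2 * u ^ 2 * z - u ^ 3 * z - 3 * u ^ 2 - 4 * u - 3

/-- `Ψ₂` of formula (9). -/
noncomputable def Psi2 (z u : ℝ) : ℝ :=
  -z ^ 3 * u ^ 3 + 3 * u ^ 3 * z ^ 2 - 2 * u ^ 3 * z - 19 * u ^ 2 * z + 22 * z ^ 2 * u ^ 2
    + 6 * u ^ 2 - 3 * z ^ 3 * u ^ 2 + 14 * u - 3 * z ^ 3 * u - 46 * z * u + 35 * z ^ 2 * u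
    + 14 - 29 * z - z ^ 3 + 16 * z ^ 2

/-- The function `M₂(z,u)` of formula (9). -/
noncomputable def M2R (z u : ℝ) : ℝ :=
  -(8 * u / (1 - z) ^ 2)
      * (∫ t in (0 : ℝ)..z, (1 / (1 - t * (1 + u))) * Real.log (1 / (1 - t)))
    + 4 * u * (1 + u) ^ 2 * (1 - z + 2 * u - u * z) / (1 - z * (1 + u)) ^ 3
        * Real.log (1 / (1 - z)) ^ 2
    + 12 * u / ((1 - z) ^ 2 * (1 + u) ^ 2) * Real.log (1 / (1 - z * (1 + u)))
    + 4 * u * Psi1 z u / ((1 - z) * (1 - z * (1 + u)) ^ 3) * Real.log (1 / (1 - z))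
    + 2 * u ^ 2 * z * Psi2 z u / ((1 - z) ^ 2 * (1 - z * (1 + u)) ^ 3 * (1 + u))

/-!
Write `q = (1 − t)·Φ`. An integration by parts turns `F` into
`2z(v−1)/(1−z)² + q(v,z)/(1−z) − 2(v−1)/(1−z)²·∫₀^z q(v,t) dt`. Because of the factor `v − 1`, its
second derivative at `v = 1` involves only `∂²q/∂v²(1,z)` and `∫₀^z ∂q/∂v(1,t) dt`. Since `Ω = 1`
at `v = 1`, both derivatives of `q` are rational in `t` and `log (1 − t)`, and the integral is
elementary up to the contribution of `2u/(1 − t(1+u))·log(1/(1−t))`, which is the integral left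
in `M₂`.
-/

open Filter MeasureTheory Set Topology
open scoped ContDiff

section SecondDerivatives

variable {𝕜 : Type*} [NontriviallyNormedField 𝕜]

lemma hasDerivAt_deriv_of_eventually {E : Type*} [NormedAddCommGroup E] [NormedSpace 𝕜 E]
    {f f' : 𝕜 → E} {f'' : E} {x : 𝕜} (hf : ∀ᶠ y in 𝓝 x, HasDerivAt f (f' y) y)
    (hf' : HasDerivAt f' f'' x) : HasDerivAt (deriv f) f'' x :=
  hf'.congr_of_eventuallyEq (hf.mono fun _ h => h.deriv)

lemma hasDerivAt_deriv_div {f f' g g' : 𝕜 → 𝕜} {f'' g'' x : 𝕜}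
    (hf : ∀ᶠ y in 𝓝 x, HasDerivAt f (f' y) y) (hf' : HasDerivAt f' f'' x)
    (hg : ∀ᶠ y in 𝓝 x, HasDerivAt g (g' y) y) (hg' : HasDerivAt g' g'' x) (hx : g x ≠ 0) :
    HasDerivAt (deriv fun y => f y / g y)
      (((f'' * g x - f x * g'') * g x - 2 * g' x * (f' x * g x - f x * g' x)) / g x ^ 3) x := by
  have hfx := hf.self_of_nhds
  have hgx := hg.self_of_nhds
  have hquot : ∀ᶠ y in 𝓝 x,
      HasDerivAt (fun y => f y / g y) ((f' y * g y - f y * g' y) / g y ^ 2) y := by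
    filter_upwards [hf, hg, hgx.continuousAt.eventually_ne hx] with y hfy hgy hy
    exact hfy.fun_div hgy hy
  refine hasDerivAt_deriv_of_eventually hquot ((((hf'.fun_mul hgx).fun_sub
    (hfx.fun_mul hg')).fun_div (hgx.fun_pow 2) (pow_ne_zero 2 hx)).congr_deriv ?_)
  field_simp
  push_cast
  ring

lemma hasDerivAt_sub_smul {E : Type*} [NormedAddCommGroup E] [NormedSpace 𝕜 E] {g : 𝕜 → E} {a : 𝕜}
    (hg : ContinuousAt g a) : HasDerivAt (fun x => (x - a) • g x) (g a) a := by
  rw [hasDerivAt_iff_tendsto_slope]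
  refine (hg.tendsto.mono_left nhdsWithin_le_nhds).congr' ?_
  filter_upwards [self_mem_nhdsWithin] with x hx
  rw [slope_def_module, sub_self, zero_smul, sub_zero, inv_smul_smul₀ (sub_ne_zero.2 hx)]

end SecondDerivatives

section Slices

lemma continuousOn_slice {X Y Z : Type*} [TopologicalSpace X] [TopologicalSpace Y]
    [TopologicalSpace Z] {g : X × Y → Z} {K : Set Y} {x : X}
    (hg : ∀ y ∈ K, ContinuousAt g (x, y)) : ContinuousOn (fun y => g (x, y)) K := fun y hy =>
  ((hg y hy).comp (f := fun y => (x, y)) (by fun_prop)).continuousWithinAt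

lemma exists_eventually_norm_le_of_continuousAt {X Y E : Type*} [TopologicalSpace X]
    [TopologicalSpace Y] [SeminormedAddCommGroup E] {g : X × Y → E} {K : Set Y} (hK : IsCompact K)
    {x : X} (hg : ∀ y ∈ K, ContinuousAt g (x, y)) :
    ∃ C, ∀ᶠ x' in 𝓝 x, ∀ y ∈ K, ‖g (x', y)‖ ≤ C := by
  obtain ⟨C, hC⟩ := hK.exists_bound_of_continuousOn (continuousOn_slice hg)
  refine ⟨C + 1, hK.eventually_forall_of_forall_eventually fun y hy => ?_⟩
  exact (hg y hy).norm.eventually_le_const (lt_add_of_le_of_pos (hC y hy) one_pos)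

variable {𝕜 E F G : Type*} [NontriviallyNormedField 𝕜] [NormedAddCommGroup E] [NormedSpace 𝕜 E]
  [NormedAddCommGroup F] [NormedSpace 𝕜 F] [NormedAddCommGroup G] [NormedSpace 𝕜 G]
  {n : WithTop ℕ∞}

lemma contDiffAt_slice_fst {f : E × F → G} {x : E} {y : F} (hf : ContDiffAt 𝕜 n f (x, y)) :
    ContDiffAt 𝕜 n (fun x' => f (x', y)) x :=
  hf.comp (f := fun x' => (x', y)) x (by fun_prop)

lemma contDiffAt_slice_snd {f : E × F → G} {x : E} {y : F} (hf : ContDiffAt 𝕜 n f (x, y)) :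
    ContDiffAt 𝕜 n (fun y' => f (x, y')) y :=
  hf.comp (f := fun y' => (x, y')) y (by fun_prop)

lemma eventually_forall_contDiffAt {f : E × F → G} {K : Set F} (hK : IsCompact K) {x : E}
    (hn : n ≠ ∞) (hf : ∀ y ∈ K, ContDiffAt 𝕜 n f (x, y)) :
    ∀ᶠ x' in 𝓝 x, ∀ y ∈ K, ContDiffAt 𝕜 n f (x', y) :=
  hK.eventually_forall_of_forall_eventually fun y hy => (hf y hy).eventually hn

lemma continuousAt_deriv_fst {f : 𝕜 × F → G} {p : 𝕜 × F} (hf : ContDiffAt 𝕜 1 f p) :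
    ContinuousAt (fun q : 𝕜 × F => deriv (fun x => f (x, q.2)) q.1) p := by
  have hfderiv : ContinuousAt (fun q => fderiv 𝕜 f q (1, 0)) p :=
    (hf.continuousAt_fderiv one_ne_zero).clm_apply continuousAt_const
  refine hfderiv.congr ?_
  filter_upwards [hf.eventually (by simp)] with q hq
  exact ((hq.differentiableAt one_ne_zero).hasFDerivAt.comp_hasDerivAt q.1
    ((hasDerivAt_id q.1).prodMk (hasDerivAt_const q.1 q.2))).deriv.symm

end Slices

section ParametricIntegral

variable {E : Type*} [NormedAddCommGroup E] [NormedSpace ℝ E]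

lemma continuousAt_intervalIntegral {X : Type*} [TopologicalSpace X] [FirstCountableTopology X]
    {g : X × ℝ → E} {a b : ℝ} {x : X}
    (hg : ∀ t ∈ uIcc a b, ∀ᶠ p in 𝓝 (x, t), ContinuousAt g p) :
    ContinuousAt (fun y => ∫ t in a..b, g (y, t)) x := by
  have hg' : ∀ᶠ y in 𝓝 x, ∀ t ∈ uIcc a b, ContinuousAt g (y, t) :=
    isCompact_uIcc.eventually_forall_of_forall_eventually hg
  have hgx := hg'.self_of_nhds
  obtain ⟨C, hC⟩ := exists_eventually_norm_le_of_continuousAt isCompact_uIcc hgx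
  refine intervalIntegral.continuousAt_of_dominated_interval (bound := fun _ => C) ?_ ?_
    intervalIntegrable_const (.of_forall fun t ht => ?_)
  · filter_upwards [hg'] with y hy
    exact ((continuousOn_slice hy).mono uIoc_subset_uIcc).aestronglyMeasurable measurableSet_uIoc
  · filter_upwards [hC] with y hy
    exact .of_forall fun t ht => hy t (uIoc_subset_uIcc ht)
  · exact (hgx t (uIoc_subset_uIcc ht)).comp (f := fun y => (y, t)) (by fun_prop)

lemma hasDerivAt_intervalIntegral_of_contDiffAt {f : ℝ × ℝ → E} {a b x : ℝ}
    (hf : ∀ t ∈ uIcc a b, ContDiffAt ℝ 1 f (x, t)) :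
    HasDerivAt (fun y => ∫ t in a..b, f (y, t)) (∫ t in a..b, deriv (fun y => f (y, t)) x) x := by
  have hsmooth := eventually_forall_contDiffAt isCompact_uIcc (by simp) hf
  obtain ⟨C, hC⟩ := exists_eventually_norm_le_of_continuousAt isCompact_uIcc
    fun t ht => continuousAt_deriv_fst (hf t ht)
  have hmeas {g : ℝ → E} (hg : ContinuousOn g (uIcc a b)) :
      AEStronglyMeasurable g (volume.restrict (uIoc a b)) :=
    (hg.mono uIoc_subset_uIcc).aestronglyMeasurable measurableSet_uIoc
  refine (intervalIntegral.hasDerivAt_integral_of_dominated_loc_of_deriv_le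
    (F' := fun y t => deriv (fun y => f (y, t)) y) (bound := fun _ => C) (hsmooth.and hC)
    ?_ ?_ ?_ (.of_forall fun t ht y hy => hy.2 t (uIoc_subset_uIcc ht)) intervalIntegrable_const
    (.of_forall fun t ht y hy => ?_)).2
  · filter_upwards [hsmooth] with y hy
    exact hmeas (continuousOn_slice fun t ht => (hy t ht).continuousAt)
  · exact (continuousOn_slice fun t ht => (hf t ht).continuousAt).intervalIntegrable
  · exact hmeas (continuousOn_slice fun t ht => continuousAt_deriv_fst (hf t ht))
  · exact ((contDiffAt_slice_fst (hy.1 t (uIoc_subset_uIcc ht))).differentiableAt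
      one_ne_zero).hasDerivAt

lemma continuousAt_intervalIntegral_deriv {f : ℝ × ℝ → E} {a b x : ℝ}
    (hf : ∀ t ∈ uIcc a b, ContDiffAt ℝ 1 f (x, t)) :
    ContinuousAt (fun y => ∫ t in a..b, deriv (fun y => f (y, t)) y) x :=
  continuousAt_intervalIntegral (g := fun p => deriv (fun y => f (y, p.2)) p.1) fun t ht =>
    ((hf t ht).eventually (by simp)).mono fun _ => continuousAt_deriv_fst

end ParametricIntegral

lemma integral_deriv_sub_div_mul_sq {φ : ℝ → ℝ} {a b : ℝ} (v : ℝ)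
    (hφ : ∀ t ∈ uIcc a b, ContDiffAt ℝ 1 φ t) :
    ∫ t in a..b, (deriv φ t - 2 * v / (1 - t) * φ t) * (1 - t) ^ 2 =
      φ b * (1 - b) ^ 2 - φ a * (1 - a) ^ 2 + 2 * (1 - v) * ∫ t in a..b, φ t * (1 - t) := by
  have hφc : ContinuousOn φ (uIcc a b) := fun t ht => (hφ t ht).continuousAt.continuousWithinAt
  have hφ'c : ContinuousOn (deriv φ) (uIcc a b) := fun t ht => by
    simpa only [fderiv_apply_one_eq_deriv] using (((hφ t ht).continuousAt_fderiv
      one_ne_zero).clm_apply (continuousAt_const (y := (1 : ℝ)))).continuousWithinAt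
  have hprim : ∀ t ∈ uIcc a b, HasDerivAt (fun t => φ t * (1 - t) ^ 2)
      (deriv φ t * (1 - t) ^ 2 - 2 * (φ t * (1 - t))) t := fun t ht => by
    refine (((hφ t ht).differentiableAt one_ne_zero).hasDerivAt.fun_mul
      (((hasDerivAt_id t).const_sub 1).fun_pow 2)).congr_deriv ?_
    simp only [id_eq]
    ring
  rw [← intervalIntegral.integral_eq_sub_of_hasDerivAt hprim
    (ContinuousOn.intervalIntegrable (by fun_prop)), ← intervalIntegral.integral_const_mul,
    ← intervalIntegral.integral_add (ContinuousOn.intervalIntegrable (by fun_prop))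
      (ContinuousOn.intervalIntegrable (by fun_prop))]
  refine intervalIntegral.integral_congr fun t _ => ?_
  rcases eq_or_ne (1 - t) 0 with ht | ht
  · simp [ht]
  · field_simp
    ring

/-- The derivative `∂Ω/∂v`, at the points where the radicand of `Ω` is positive. -/
noncomputable def omegaDeriv (u v : ℝ) : ℝ := 2 * (1 + u) * (2 * v - 1) / OmegaR u v

/-- The expression `Ω + 1 − 2cv + (1−t)^Ω·(Ω − 1 + 2cv)`, which is the numerator of `Φ(t,u,v)` for
`c = 1` and, up to the factor `1 − t`, its denominator for `c = 1 + u`. -/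
noncomputable def phiFactor (u c v t : ℝ) : ℝ :=
  OmegaR u v + 1 - 2 * v * c
    + Real.exp (OmegaR u v * Real.log (1 - t)) * (OmegaR u v - 1 + 2 * v * c)

/-- The derivative of `phiFactor` with respect to `v`, where the radicand of `Ω` is positive. -/
noncomputable def phiFactorDeriv (u c v t : ℝ) : ℝ :=
  omegaDeriv u v - 2 * c
    + (Real.exp (OmegaR u v * Real.log (1 - t)) * (omegaDeriv u v * Real.log (1 - t))
        * (OmegaR u v - 1 + 2 * v * c)
      + Real.exp (OmegaR u v * Real.log (1 - t)) * (omegaDeriv u v + 2 * c))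

/-- The quotient `(1 − t)·Φ(t,u,v)`, from which the pole of `Φ` at `t = 1` has been removed. -/
noncomputable def phiRatio (u v t : ℝ) : ℝ := phiFactor u 1 v t / phiFactor u (1 + u) v t

/-- An antiderivative in `t` of `∂/∂v phiRatio u v t` at `v = 1`, once the part
`2u/(1 − t(1+u))·log(1/(1−t))` without elementary antiderivative is taken away. -/
noncomputable def phiRatioDerivPrimitive (u t : ℝ) : ℝ :=
  -2 * u * (1 - t) * Real.log (1 - t) / (1 - t * (1 + u))
    + 3 * u / (1 + u) ^ 2 * Real.log (1 - t * (1 + u))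
    + u * t * (1 - t * (1 + u) - 2 * u) / ((1 + u) * (1 - t * (1 + u)))

lemma OmegaR_one (u : ℝ) : OmegaR u 1 = 1 := by simp [OmegaR]

lemma omegaDeriv_one (u : ℝ) : omegaDeriv u 1 = 2 * (1 + u) := by
  rw [omegaDeriv, OmegaR_one]; ring

lemma eventually_radicand_pos (u : ℝ) : ∀ᶠ v in 𝓝 (1 : ℝ), 0 < 1 - 4 * (1 + u) * v * (1 - v) :=
  have hcont : Continuous fun v : ℝ => 1 - 4 * (1 + u) * v * (1 - v) := by fun_prop
  hcont.continuousAt.eventually_const_lt (by norm_num)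

lemma hasDerivAt_OmegaR {u v : ℝ} (h : 0 < 1 - 4 * (1 + u) * v * (1 - v)) :
    HasDerivAt (OmegaR u) (omegaDeriv u v) v := by
  have hradicand : HasDerivAt (fun v : ℝ => 1 - 4 * (1 + u) * v * (1 - v))
      (4 * (1 + u) * (2 * v - 1)) v := by
    refine ((((hasDerivAt_id v).const_mul (4 * (1 + u))).fun_mul
      ((hasDerivAt_id v).const_sub 1)).const_sub 1).congr_deriv ?_
    simp only [id_eq]
    ring
  refine (hradicand.sqrt h.ne').congr_deriv ?_
  rw [omegaDeriv, OmegaR]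
  field_simp
  ring

lemma hasDerivAt_omegaDeriv_one (u : ℝ) : HasDerivAt (omegaDeriv u) (-4 * u * (1 + u)) 1 := by
  have hnum : HasDerivAt (fun v : ℝ => 2 * (1 + u) * (2 * v - 1)) (2 * (1 + u) * (2 * 1)) 1 :=
    (((hasDerivAt_id (1 : ℝ)).const_mul 2).sub_const 1).const_mul (2 * (1 + u))
  refine (hnum.fun_div (hasDerivAt_OmegaR (by norm_num))
    (by rw [OmegaR_one]; exact one_ne_zero)).congr_deriv ?_
  rw [OmegaR_one, omegaDeriv_one]
  ring

lemma hasDerivAt_phiFactor {u v : ℝ} (c t : ℝ) (h : 0 < 1 - 4 * (1 + u) * v * (1 - v)) :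
    HasDerivAt (fun v => phiFactor u c v t) (phiFactorDeriv u c v t) v := by
  have hΩ := hasDerivAt_OmegaR h
  have hc : HasDerivAt (fun v : ℝ => 2 * v * c) (2 * c) v := by
    simpa using ((hasDerivAt_id v).const_mul 2).mul_const c
  exact ((hΩ.add_const 1).fun_sub hc).fun_add
    ((hΩ.mul_const (Real.log (1 - t))).exp.fun_mul ((hΩ.sub_const 1).fun_add hc))

lemma hasDerivAt_phiFactorDeriv_one (u c : ℝ) {t : ℝ} (ht : t < 1) :
    HasDerivAt (fun v => phiFactorDeriv u c v t)
      (-4 * u * (1 + u) + (1 - t) * (8 * (1 + u) ^ 2 * c * Real.log (1 - t) ^ 2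
        + 8 * (1 + u) * (1 + u + c - u * c) * Real.log (1 - t) - 4 * u * (1 + u))) 1 := by
  have hΩ := hasDerivAt_OmegaR (u := u) (v := 1) (by norm_num)
  have hΩ' := hasDerivAt_omegaDeriv_one u
  have hc : HasDerivAt (fun v : ℝ => 2 * v * c) (2 * c) 1 := by
    simpa using ((hasDerivAt_id (1 : ℝ)).const_mul 2).mul_const c
  have hexp := (hΩ.mul_const (Real.log (1 - t))).exp
  have hexp' := hexp.fun_mul (hΩ'.mul_const (Real.log (1 - t)))
  refine ((hΩ'.sub_const (2 * c)).fun_add ((hexp'.fun_mul ((hΩ.sub_const 1).fun_add hc)).fun_add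
    (hexp.fun_mul (hΩ'.add_const (2 * c))))).congr_deriv ?_
  simp only [omegaDeriv_one, OmegaR_one, one_mul, Real.exp_log (sub_pos.2 ht)]
  ring

lemma phiFactor_one (u c : ℝ) {t : ℝ} (ht : t < 1) : phiFactor u c 1 t = 2 * (1 - t * c) := by
  rw [phiFactor, OmegaR_one, one_mul, Real.exp_log (sub_pos.2 ht)]; ring

lemma phiFactorDeriv_one (u c : ℝ) {t : ℝ} (ht : t < 1) : phiFactorDeriv u c 1 t =
    2 * (1 + u - c) + (1 - t) * (4 * (1 + u) * c * Real.log (1 - t) + 2 * (1 + u + c)) := by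
  rw [phiFactorDeriv, omegaDeriv_one, OmegaR_one, one_mul, Real.exp_log (sub_pos.2 ht)]; ring

lemma contDiffAt_phiFactor {n : WithTop ℕ∞} (u c : ℝ) {v t : ℝ}
    (hv : 0 < 1 - 4 * (1 + u) * v * (1 - v)) (ht : t < 1) :
    ContDiffAt ℝ n (fun p : ℝ × ℝ => phiFactor u c p.1 p.2) (v, t) := by
  have hΩ : ContDiffAt ℝ n (fun p : ℝ × ℝ => OmegaR u p.1) (v, t) :=
    ContDiffAt.sqrt (f := fun p : ℝ × ℝ => 1 - 4 * (1 + u) * p.1 * (1 - p.1))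
      (by fun_prop) hv.ne'
  have hlog : ContDiffAt ℝ n (fun p : ℝ × ℝ => Real.log (1 - p.2)) (v, t) :=
    ContDiffAt.log (by fun_prop) (sub_pos.2 ht).ne'
  unfold phiFactor
  fun_prop

lemma phiFactor_one_ne_zero {u c t : ℝ} (ht : t < 1) (htc : t * c < 1) :
    phiFactor u c 1 t ≠ 0 := by
  rw [phiFactor_one u c ht]
  linarith

lemma contDiffAt_phiRatio_one {n : WithTop ℕ∞} {u t : ℝ} (ht : t < 1) (htu : t * (1 + u) < 1) :
    ContDiffAt ℝ n (fun p : ℝ × ℝ => phiRatio u p.1 p.2) (1, t) :=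
  (contDiffAt_phiFactor u 1 (by norm_num) ht).fun_div
    (contDiffAt_phiFactor u (1 + u) (by norm_num) ht) (phiFactor_one_ne_zero ht htu)

lemma mul_lt_one_of_mem_uIcc {R : Type*} [CommRing R] [LinearOrder R] [IsStrictOrderedRing R]
    {a z t : R} (hz : z * a < 1) (ht : t ∈ uIcc 0 z) : t * a < 1 := by
  rcases mem_uIcc.1 ht with ⟨h₀, h₁⟩ | ⟨h₀, h₁⟩ <;> rcases le_total 0 a with ha | ha <;> nlinarith

lemma lt_one_of_mem_uIcc {R : Type*} [Zero R] [One R] [LinearOrder R] [ZeroLEOneClass R]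
    [NeZero (1 : R)] {z t : R} (hz : z < 1) (ht : t ∈ uIcc 0 z) : t < 1 :=
  ht.2.trans_lt (max_lt one_pos hz)

lemma contDiffAt_phiRatio_one_of_mem_uIcc {n : WithTop ℕ∞} {u z : ℝ} (hz : z < 1)
    (hzu : z * (1 + u) < 1) :
    ∀ t ∈ uIcc 0 z, ContDiffAt ℝ n (fun p : ℝ × ℝ => phiRatio u p.1 p.2) (1, t) := fun _ ht =>
  contDiffAt_phiRatio_one (lt_one_of_mem_uIcc hz ht) (mul_lt_one_of_mem_uIcc hzu ht)

lemma deriv_phiRatio_one {u t : ℝ} (ht : t < 1) (htu : t * (1 + u) < 1) :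
    deriv (fun v => phiRatio u v t) 1 =
      -u * (2 * (1 + u) * (1 - t) * Real.log (1 - t) + t * (1 + 2 * u - t * (1 + u)))
        / (1 - t * (1 + u)) ^ 2 := by
  refine ((hasDerivAt_phiFactor 1 t (by norm_num)).fun_div
    (hasDerivAt_phiFactor (1 + u) t (by norm_num)) (phiFactor_one_ne_zero ht htu)).deriv.trans ?_
  simp only [phiFactor_one u _ ht, phiFactorDeriv_one u _ ht]
  field_simp
  ring

lemma hasDerivAt_deriv_phiRatio_one {u t : ℝ} (ht : t < 1) (htu : t * (1 + u) < 1) :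
    HasDerivAt (deriv fun v => phiRatio u v t)
      (2 * u * (1 + u) * (2 * (1 + u) * (1 - t) * (1 + 2 * u - t * (1 + u)) * Real.log (1 - t) ^ 2
        + 2 * (1 - t) * (1 + 3 * u + (u ^ 2 - 1) * t) * Real.log (1 - t)
        + t * (2 * (1 + 3 * u) - (1 + 2 * u) * (4 + u) * t + (1 + u) * (2 + u) * t ^ 2))
        / (1 - t * (1 + u)) ^ 3) 1 := by
  have hderiv (c : ℝ) := (eventually_radicand_pos u).mono fun _ h => hasDerivAt_phiFactor c t h
  refine (hasDerivAt_deriv_div (hderiv 1) (hasDerivAt_phiFactorDeriv_one u 1 ht) (hderiv (1 + u))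
    (hasDerivAt_phiFactorDeriv_one u (1 + u) ht) (phiFactor_one_ne_zero ht htu)).congr_deriv ?_
  simp only [phiFactor_one u _ ht, phiFactorDeriv_one u _ ht]
  field_simp
  ring

lemma hasDerivAt_phiRatioDerivPrimitive {u t : ℝ} (hu : 1 + u ≠ 0) (ht : t < 1)
    (htu : t * (1 + u) < 1) :
    HasDerivAt (phiRatioDerivPrimitive u) (deriv (fun v => phiRatio u v t) 1
      - 2 * u * (1 / (1 - t * (1 + u)) * Real.log (1 / (1 - t)))) t := by
  have hx : 1 - t ≠ 0 := (sub_pos.2 ht).ne'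
  have hy : 1 - t * (1 + u) ≠ 0 := (sub_pos.2 htu).ne'
  have hdx : HasDerivAt (fun t : ℝ => 1 - t) (-1) t := (hasDerivAt_id t).const_sub 1
  have hdy : HasDerivAt (fun t : ℝ => 1 - t * (1 + u)) (-(1 + u)) t := by
    simpa using ((hasDerivAt_id t).mul_const (1 + u)).const_sub 1
  have hdt : HasDerivAt (fun t : ℝ => u * t) u t := by
    simpa using (hasDerivAt_id t).const_mul u
  refine (((((hdx.const_mul (-2 * u)).fun_mul (hdx.log hx)).fun_div hdy hy).fun_add
    ((hdy.log hy).const_mul (3 * u / (1 + u) ^ 2))).fun_add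
    ((hdt.fun_mul (hdy.sub_const (2 * u))).fun_div (hdy.const_mul (1 + u))
      (mul_ne_zero hu hy))).congr_deriv ?_
  rw [deriv_phiRatio_one ht htu, one_div (1 - t), Real.log_inv]
  field_simp
  ring

lemma integral_deriv_phiRatio_one {u z : ℝ} (hu : 1 + u ≠ 0) (hz : z < 1)
    (hzu : z * (1 + u) < 1) :
    ∫ t in (0 : ℝ)..z, deriv (fun v => phiRatio u v t) 1 =
      2 * u * (∫ t in (0 : ℝ)..z, 1 / (1 - t * (1 + u)) * Real.log (1 / (1 - t)))
        + phiRatioDerivPrimitive u z := by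
  have hx : ∀ t ∈ uIcc 0 z, t < 1 := fun t => lt_one_of_mem_uIcc hz
  have hy : ∀ t ∈ uIcc 0 z, t * (1 + u) < 1 := fun t => mul_lt_one_of_mem_uIcc hzu
  have hderiv : IntervalIntegrable (fun t => deriv (fun v => phiRatio u v t) 1) volume 0 z :=
    (continuousOn_slice fun t ht => continuousAt_deriv_fst
      (contDiffAt_phiRatio_one_of_mem_uIcc hz hzu t ht)).intervalIntegrable
  have hlog : IntervalIntegrable
      (fun t => 2 * u * (1 / (1 - t * (1 + u)) * Real.log (1 / (1 - t)))) volume 0 z := by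
    have hx' : ∀ t ∈ uIcc 0 z, 1 - t ≠ 0 := fun t ht => (sub_pos.2 (hx t ht)).ne'
    have hy' : ∀ t ∈ uIcc 0 z, 1 - t * (1 + u) ≠ 0 := fun t ht => (sub_pos.2 (hy t ht)).ne'
    simp only [one_div, Real.log_inv]
    exact ContinuousOn.intervalIntegrable (by fun_prop (disch := assumption))
  have hprim := intervalIntegral.integral_eq_sub_of_hasDerivAt (fun t ht =>
    hasDerivAt_phiRatioDerivPrimitive hu (hx t ht) (hy t ht)) (hderiv.sub hlog)
  have hprim_zero : phiRatioDerivPrimitive u 0 = 0 := by simp [phiRatioDerivPrimitive]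
  rw [intervalIntegral.integral_sub hderiv hlog, intervalIntegral.integral_const_mul,
    hprim_zero] at hprim
  linarith

lemma PhiR_eq_phiRatio_div (u v t : ℝ) : PhiR t u v = phiRatio u v t / (1 - t) := by
  simp only [PhiR, denPhi, phiRatio, phiFactor, mul_one, div_div]

lemma phiRatio_zero {u v : ℝ} (hΩ : OmegaR u v ≠ 0) : phiRatio u v 0 = 1 := by
  have hfactor (c : ℝ) : phiFactor u c v 0 = 2 * OmegaR u v := by
    simp only [phiFactor, sub_zero, Real.log_one, mul_zero, Real.exp_zero]
    ring
  rw [phiRatio, hfactor, hfactor, div_self (mul_ne_zero two_ne_zero hΩ)]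

lemma FR_eq {u v z : ℝ} (hz : z < 1) (hΩ : OmegaR u v ≠ 0)
    (hq : ∀ t ∈ uIcc 0 z, ContDiffAt ℝ 1 (phiRatio u v) t) :
    FR z u v = 2 * z * (v - 1) / (1 - z) ^ 2 + phiRatio u v z / (1 - z)
      - 2 / (1 - z) ^ 2 * ((v - 1) * ∫ t in (0 : ℝ)..z, phiRatio u v t) := by
  have hne : ∀ t ∈ uIcc 0 z, 1 - t ≠ 0 := fun t ht => (sub_pos.2 (lt_one_of_mem_uIcc hz ht)).ne'
  have hΦ : ∀ t ∈ uIcc 0 z, ContDiffAt ℝ 1 (fun s => PhiR s u v) t := fun t ht => by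
    simp only [PhiR_eq_phiRatio_div]
    exact (hq t ht).fun_div (by fun_prop) (hne t ht)
  have hint : ∫ t in (0 : ℝ)..z, PhiR t u v * (1 - t) = ∫ t in (0 : ℝ)..z, phiRatio u v t :=
    intervalIntegral.integral_congr fun t ht => by
      simp only [PhiR_eq_phiRatio_div, div_mul_cancel₀ _ (hne t ht)]
  have hz' := hne z right_mem_uIcc
  rw [FR, integral_deriv_sub_div_mul_sq v hΦ, hint, PhiR_eq_phiRatio_div, PhiR_eq_phiRatio_div,
    phiRatio_zero hΩ]
  field_simp
  ring

lemma FR_eventuallyEq {u z : ℝ} (hz : z < 1) (hzu : z * (1 + u) < 1) :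
    (fun v => FR z u v) =ᶠ[𝓝 1] fun v => 2 * z * (v - 1) / (1 - z) ^ 2 + phiRatio u v z / (1 - z)
      - 2 / (1 - z) ^ 2 * ((v - 1) * ∫ t in (0 : ℝ)..z, phiRatio u v t) := by
  filter_upwards [eventually_radicand_pos u, eventually_forall_contDiffAt (n := 1) isCompact_uIcc
    (by simp) (contDiffAt_phiRatio_one_of_mem_uIcc hz hzu)] with v hradicand hsmooth
  exact FR_eq hz (Real.sqrt_pos.2 hradicand).ne' fun t ht => contDiffAt_slice_snd (hsmooth t ht)

lemma hasDerivAt_deriv_FR {u z : ℝ} (hz : z < 1) (hzu : z * (1 + u) < 1) {q'' : ℝ}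
    (hq'' : HasDerivAt (deriv fun v => phiRatio u v z) q'' 1) :
    HasDerivAt (deriv fun v => FR z u v) (q'' / (1 - z)
      - 4 / (1 - z) ^ 2 * ∫ t in (0 : ℝ)..z, deriv (fun v => phiRatio u v t) 1) 1 := by
  have hsmooth := contDiffAt_phiRatio_one_of_mem_uIcc (n := 1) hz hzu
  have hnear := eventually_forall_contDiffAt isCompact_uIcc (by simp) hsmooth
  have hI : ∀ᶠ v in 𝓝 1, HasDerivAt (fun v => ∫ t in (0 : ℝ)..z, phiRatio u v t)
      (∫ t in (0 : ℝ)..z, deriv (fun w => phiRatio u w t) v) v :=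
    hnear.mono fun v hv => hasDerivAt_intervalIntegral_of_contDiffAt hv
  have hI' := hasDerivAt_sub_smul (continuousAt_intervalIntegral_deriv hsmooth)
  have hq : ∀ᶠ v in 𝓝 1, HasDerivAt (fun v => phiRatio u v z)
      (deriv (fun v => phiRatio u v z) v) v := hnear.mono fun v hv =>
    ((contDiffAt_slice_fst (hv z right_mem_uIcc)).differentiableAt one_ne_zero).hasDerivAt
  have hlin (v : ℝ) : HasDerivAt (fun v : ℝ => 2 * z * (v - 1) / (1 - z) ^ 2)
      (2 * z / (1 - z) ^ 2) v := by
    simpa using (((hasDerivAt_id v).sub_const 1).const_mul (2 * z)).div_const ((1 - z) ^ 2)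
  have hFR' : ∀ᶠ v in 𝓝 1, HasDerivAt (fun v => FR z u v) (2 * z / (1 - z) ^ 2
      + deriv (fun v => phiRatio u v z) v / (1 - z)
      - 2 / (1 - z) ^ 2 * ((∫ t in (0 : ℝ)..z, phiRatio u v t)
        + (v - 1) * ∫ t in (0 : ℝ)..z, deriv (fun w => phiRatio u w t) v)) v := by
    filter_upwards [(FR_eventuallyEq hz hzu).eventuallyEq_nhds, hI, hq] with v hFRv hIv hqv
    refine (((hlin v).fun_add (hqv.div_const (1 - z))).fun_sub ((((hasDerivAt_id v).sub_const
      1).fun_mul hIv).const_mul (2 / (1 - z) ^ 2))).congr_of_eventuallyEq hFRv |>.congr_deriv ?_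
    simp
  refine hasDerivAt_deriv_of_eventually hFR' (((hq''.div_const (1 - z)).const_add _).fun_sub
    ((hI.self_of_nhds.fun_add hI').const_mul (2 / (1 - z) ^ 2)) |>.congr_deriv ?_)
  ring

theorem deriv2_F_at_one_general (u z : ℝ) (hu : u ≠ -1) (hz : z < 1) (hzu : z * (1 + u) < 1) :
    HasDerivAt (fun v => deriv (fun w => FR z u w) v) (M2R z u) 1 := by
  have ha : 1 + u ≠ 0 := fun h => hu (by linarith)
  have hx : 1 - z ≠ 0 := (sub_pos.2 hz).ne'
  have hy : 1 - z * (1 + u) ≠ 0 := (sub_pos.2 hzu).ne'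
  refine (hasDerivAt_deriv_FR hz hzu (hasDerivAt_deriv_phiRatio_one hz hzu)).congr_deriv ?_
  rw [integral_deriv_phiRatio_one ha hz hzu, phiRatioDerivPrimitive, M2R, Psi1, Psi2,
    one_div (1 - z), one_div (1 - z * (1 + u)), Real.log_inv, Real.log_inv]
  generalize (∫ t in (0 : ℝ)..z, 1 / (1 - t * (1 + u)) * Real.log (1 / (1 - t))) = K
  generalize Real.log (1 - z * (1 + u)) = L₂
  -- `field_simp` would expand this denominator and no longer recognize it as nonzero
  generalize hyd : 1 - z * (1 + u) = y at hy ⊢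
  field_simp
  rw [← hyd]
  ring

/-- The function `v ↦ F(z,u,v)` is twice differentiable at `v = 1`, and its second
derivative there equals `M₂(z,u)`. -/
theorem deriv2_F_at_one (u z : ℝ) (hu : -1 < u) (hz : z ∈ Set.Ico (0 : ℝ) 1)
    (hzu : z * (1 + u) < 1) :
    HasDerivAt (fun v => deriv (fun w => FR z u w) v) (M2R z u) 1 :=
  deriv2_F_at_one_general u z hu.ne' hz.2 hzu
end
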